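/- arXiv:0912.3239 — 9 statements merged into one kernel-verified Lean document; each statement's English description precedes it below -/
import Mathlib

section
/- Let 1 ≤ p < 2 < q ≤ ∞ with 1/p + 1/q = 1, let C > 0, α > 0, ε ∈ (0,1), and let d ≥ 2 be an integer. Set δ = 2^{-7}·α·p·ε²/(2-p). Then there exists a constant c > 0 (depending only on d, C, α, p and ε) such that for every positive integer N, every finite (d+1)-regular simple graph G whose sphere operators satisfy ‖S_n‖_{L^p(G)→L^q(G)} ≤ C·d^{-α n} for all integers 0 ≤ n ≤ N, every function φ : V → ℝ with T_d φ = λ φ for some λ ∈ ℝ and ‖φ‖_2 = 1, and every subset E ⊆ V with Σ_{x∈E} |φ(x)|² > ε, the set E satisfies |E| ≥ c·d^{δN}. -/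
/-!
Restrict the eigenfunction to `E`: let `f = φ · 1_E` and `μ = ⟨f, φ⟩ = ‖f‖₂² > ε`. The proof tests
`f` against a Fejér-type kernel in `T_d` whose nonconstant frequencies all lie in a window `[n₀, N]`.

For `m ≈ 1/ε` let `D = ∑_{|j| ≤ m} C_{rj}` with `C_n(2 cos θ) = 2 cos (nθ)` (`dirichletPoly`). Its
square is `2 ∑_{j,k} C_{r(j-k)}`, so it consists of a constant term and of terms `C_n` with
`r ≤ n ≤ 2mr`. The dilation is `r = k n₀` with `k ≤ 8m + 3` supplied by Dirichlet approximation, so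
that `D(λ)²` is at least `2(2m+1)²` (`exists_dilation`); for `|λ| > 2`, where the Chebyshev
polynomials are hyperbolic cosines up to sign, `k = 2` works because even degrees carry no sign.
Symmetry of `T_d` and Cauchy–Schwarz give `⟨D(T)² f, f⟩ = ‖D(T) f‖² ≥ D(λ)² μ²`, which exceeds the
contribution `4(2m+1)μ` of the constant term. The excess must come from the terms
`⟨C_n(T) f, f⟩` with `n ≥ n₀` (`core`).

These are small: `C_n = S_n - S_{n-2}` (Chebyshev `S`), and `S_n = p_n + d⁻¹ S_{n-2}` expands `S_n`
in the sphere polynomials with geometric weights, so decay of `⟨p_n(T) f, f⟩` at a rate slower than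
`d^{-n/2}` is inherited by `C_n` (`abs_S_le`, `abs_C_le`). The decay for `p_n` is Hölder's
inequality with the hypothesis, together with `‖f‖_p² ≤ |E|^{2/p-1} μ` (`holder`, `lpNorm_sq_le`).
One can take `n₀ ≈ ε²N/80`; since `80 < 2⁷`, the rate `α` may be lowered to `5α/8`, which is below
`1/2` whenever `α ≤ 3/4`.

For `α > 3/4` the hypothesis forces `N` to be bounded: `d^{n/2} S_n` has integer entries and does
not annihilate `δ_x`, so `‖S_n‖_{p → q} ≥ d^{-n/2}` (`one_le_sphere`), and `|E| ≥ 1` suffices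
(`delocalization_of_large_exponent`).
-/

open Polynomial Finset ENNReal Real

/-- The normalized adjacency operator `T_d` of a locally finite graph:
`(T_d f)(x) = d^{-1/2} * ∑_{y ~ x} f(y)`. -/
noncomputable def Td (d : ℕ) {V : Type*} (G : SimpleGraph V) [∀ v, Fintype (G.neighborSet v)] :
    Module.End ℝ (V → ℝ) :=
  { toFun := fun f x => (Real.sqrt d)⁻¹ * ∑ y ∈ G.neighborFinset x, f y
    map_add' := by intro f g; funext x; simp [Finset.sum_add_distrib, mul_add]
    map_smul' := by
      intro c f; funext x; simp [Finset.mul_sum]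
      exact Finset.sum_congr rfl fun y _ => by ring }

/-- The Geronimus-type polynomials for the `(d+1)`-regular tree:
`p 0 = 1`, `p 1 = X`, `p 2 = X^2 - (d+1)/d`, `p (n+1) = X * p n - p (n-1)` for `n ≥ 2`.
Substituting `T_d` yields the normalized sphere operators `S_n`. -/
noncomputable def geron (d : ℕ) : ℕ → Polynomial ℝ
  | 0 => 1
  | 1 => X
  | 2 => X ^ 2 - C (((d : ℝ) + 1) / d)
  | n + 3 => X * geron d (n + 2) - geron d (n + 1)

/-- The `ℓ^p` norm of a function on a finite set (with respect to counting measure),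
for `p ∈ [1, ∞]`. -/
noncomputable def lpNorm {V : Type*} [Fintype V] (p : ℝ≥0∞) (f : V → ℝ) : ℝ :=
  if p = ∞ then ⨆ x, |f x| else (∑ x, |f x| ^ p.toReal) ^ (1 / p.toReal)

/-! ### Dirichlet kernels in Chebyshev polynomials -/

/-- The Dirichlet kernel `∑_{|j| ≤ m} C_{rj}`, where `C_n(2 cos θ) = 2 cos (nθ)`; at `2 cos θ` it
takes the value `2 ∑_{|j| ≤ m} cos (r j θ)`. -/
noncomputable def dirichletPoly (m r : ℕ) : ℝ[X] :=
  ∑ j ∈ Finset.Icc (-(m : ℤ)) m, Chebyshev.C ℝ (r * j)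

lemma dirichletPoly_sq (m r : ℕ) :
    dirichletPoly m r * dirichletPoly m r =
      ∑ j ∈ Finset.Icc (-(m : ℤ)) m, ∑ k ∈ Finset.Icc (-(m : ℤ)) m,
        (2 : ℝ) • Chebyshev.C ℝ (r * (j - k)) := by
  -- The substitution `k ↦ -k` identifies the sums of `C_{r(j+k)}` and `C_{r(j-k)}`.
  have hneg : ∀ j : ℤ, ∑ k ∈ Finset.Icc (-(m : ℤ)) m, Chebyshev.C ℝ (r * j + r * k) =
      ∑ k ∈ Finset.Icc (-(m : ℤ)) m, Chebyshev.C ℝ (r * (j - k)) := by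
    intro j
    refine Finset.sum_nbij' (fun k => -k) (fun k => -k) ?_ ?_ ?_ ?_ ?_
    · intro k hk; simp only [Finset.mem_Icc] at *; omega
    · intro k hk; simp only [Finset.mem_Icc] at *; omega
    · intro k _; simp
    · intro k _; simp
    · intro k _; congr 1; ring
  rw [dirichletPoly, Finset.sum_mul_sum]
  refine Finset.sum_congr rfl fun j _ => ?_
  simp_rw [Chebyshev.C_mul_C, Finset.sum_add_distrib, hneg, ← Finset.smul_sum]
  rw [two_smul]
  congr 1
  exact Finset.sum_congr rfl fun k _ => by rw [mul_sub]

lemma card_Icc_neg (m : ℕ) : ((Finset.Icc (-(m : ℤ)) m).card : ℝ) = 2 * m + 1 := by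
  rw [Int.card_Icc]
  have : ((m : ℤ) + 1 - -(m : ℤ)).toNat = 2 * m + 1 := by omega
  rw [this]; push_cast; ring

/-- Every real point has a dilation `r = k * n₀`, with `k` bounded in terms of `m` only, at which the
Dirichlet kernel is comparable to its maximum on `[-2, 2]`: by Dirichlet approximation when the
point is `2 cos θ`, and by taking `r` even when it lies outside `[-2, 2]`. -/
lemma exists_dilation (lam : ℝ) (m n₀ : ℕ) :
    ∃ k : ℕ, 1 ≤ k ∧ k ≤ 8 * m + 3 ∧
      2 * (2 * (m : ℝ) + 1) ^ 2 ≤ ((dirichletPoly m (k * n₀)).eval lam) ^ 2 := by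
  suffices h : ∃ k : ℕ, 1 ≤ k ∧ k ≤ 8 * m + 3 ∧ ∀ j ∈ Finset.Icc (-(m : ℤ)) m,
      √2 ≤ (Chebyshev.C ℝ (((k * n₀ : ℕ) : ℤ) * j)).eval lam by
    obtain ⟨k, hk1, hk2, h⟩ := h
    refine ⟨k, hk1, hk2, ?_⟩
    have h1 : (2 * (m : ℝ) + 1) * √2 ≤ (dirichletPoly m (k * n₀)).eval lam := by
      rw [dirichletPoly, eval_finsetSum, ← card_Icc_neg, ← nsmul_eq_mul]
      exact Finset.card_nsmul_le_sum _ _ _ h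
    calc 2 * (2 * (m : ℝ) + 1) ^ 2 = ((2 * (m : ℝ) + 1) * √2) ^ 2 := by
          rw [mul_pow, Real.sq_sqrt (by norm_num)]; ring
      _ ≤ _ := pow_le_pow_left₀ (by positivity) h1 2
  rcases le_or_gt |lam| 2 with hl | hl
  · obtain ⟨hl1, hl2⟩ := abs_le.mp hl
    obtain ⟨θ, hθ⟩ : ∃ θ : ℝ, lam = 2 * Real.cos θ :=
      ⟨Real.arccos (lam / 2), by rw [Real.cos_arccos (by linarith) (by linarith)]; ring⟩
    obtain ⟨a, k, hk0, hkn, hak⟩ :=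
      Real.exists_int_int_abs_mul_sub_le (n₀ * θ / (2 * π)) (n := 8 * m + 3) (by omega)
    lift k to ℕ using hk0.le
    refine ⟨k, by omega, by omega, fun j hj => ?_⟩
    rw [hθ, Chebyshev.C_two_mul_real_cos]
    -- `ψ` is the representative of `k n₀ θ` modulo `2π` close to `0`.
    set ψ : ℝ := k * (n₀ * θ) - a * (2 * π) with hψ
    have hψ' : |ψ| ≤ 2 * π / (8 * m + 4) := by
      have h1 : ψ = (2 * π) * (((k : ℤ) : ℝ) * (n₀ * θ / (2 * π)) - a) := by
        rw [hψ]; push_cast; field_simp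
      rw [h1, abs_mul, abs_of_pos Real.two_pi_pos, div_eq_mul_one_div (2 * π)]
      refine mul_le_mul_of_nonneg_left (hak.trans (le_of_eq ?_)) Real.two_pi_pos.le
      push_cast; ring
    have hcos : Real.cos ((((k * n₀ : ℕ) : ℤ) * j : ℤ) * θ) = Real.cos (j * ψ) := by
      rw [← Real.cos_add_int_mul_two_pi (j * ψ) (j * a)]
      congr 1; rw [hψ]; push_cast; ring
    have hjm : |(j : ℝ)| ≤ m := by
      rw [Finset.mem_Icc] at hj
      rw [abs_le]; exact ⟨by exact_mod_cast hj.1, by exact_mod_cast hj.2⟩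
    have hjψ : |j * ψ| ≤ π / 4 := by
      rw [abs_mul]
      calc |(j : ℝ)| * |ψ| ≤ m * (2 * π / (8 * m + 4)) := by gcongr
        _ ≤ π / 4 := by
          rw [← mul_div_assoc, div_le_div_iff₀ (by positivity) (by norm_num)]
          nlinarith [Real.pi_pos]
    rw [hcos, ← Real.cos_abs]
    have := Real.cos_le_cos_of_nonneg_of_le_pi (abs_nonneg _) (by linarith [Real.pi_pos]) hjψ
    rw [Real.cos_pi_div_four] at this
    linarith
  · refine ⟨2, by omega, by omega, fun j _ => ?_⟩
    have hsq : 4 < lam ^ 2 := by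
      rw [← sq_abs]; nlinarith
    obtain ⟨s, hs⟩ : ∃ s : ℝ, lam ^ 2 - 2 = 2 * Real.cosh s :=
      ⟨Real.arcosh ((lam ^ 2 - 2) / 2), by rw [Real.cosh_arcosh (by linarith)]; ring⟩
    have h1 : (Chebyshev.C ℝ (((2 * n₀ : ℕ) : ℤ) * j)).eval lam
        = 2 * Real.cosh ((n₀ * j : ℤ) * s) := by
      have : (((2 * n₀ : ℕ) : ℤ) * j) = (n₀ * j) * 2 := by push_cast; ring
      rw [this, Chebyshev.C_mul, eval_comp, Chebyshev.C_two]
      simp only [eval_sub, eval_pow, eval_X, eval_ofNat]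
      rw [hs, Chebyshev.C_two_mul_real_cosh]
    rw [h1]
    have := Real.one_le_cosh ((n₀ * j : ℤ) * s)
    have h2 : √2 ≤ 2 := by rw [Real.sqrt_le_left (by norm_num)]; norm_num
    linarith

/-! ### From sphere polynomials to Chebyshev polynomials -/

lemma geron_succ_eq (d n : ℕ) (hd : 0 < d) :
    geron d (n + 1) =
      Chebyshev.S ℝ ((n : ℤ) + 1) - ((d : ℝ)⁻¹) • Chebyshev.S ℝ ((n : ℤ) - 1) := by
  have hd' : (d : ℝ) ≠ 0 := by positivity
  induction n using Nat.twoStepInduction with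
  | zero => simp [geron]
  | one =>
    have h : ((d : ℝ) + 1) / d = 1 + (d : ℝ)⁻¹ := by field_simp
    simp only [geron, Nat.cast_one, one_add_one_eq_two, sub_self, Chebyshev.S_zero,
      Chebyshev.S_two, smul_eq_C_mul, h, C_add, C_1]
    ring
  | more n ih1 ih2 =>
    rw [geron, ih2, ih1]
    have h1 := Chebyshev.S_add_two ℝ ((n : ℤ) + 1)
    have h2 := Chebyshev.S_add_two ℝ ((n : ℤ) - 1)
    simp only [smul_eq_C_mul]
    push_cast
    rw [show (n : ℤ) + 2 + 1 = n + 1 + 2 by ring, show (n : ℤ) + 2 - 1 = n - 1 + 2 by ring, h1, h2,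
      show (n : ℤ) - 1 + 1 = n + 1 - 1 by ring, show (n : ℤ) + 1 - 1 = n by ring]
    ring

/-- Decay of a functional along the sphere polynomials passes to the Chebyshev polynomials `S_n`,
since `S_n = p_n + d⁻¹ S_{n-2}` sums to a convergent geometric series when `d⁻¹ < x²`. -/
lemma abs_S_le (L : ℝ[X] →ₗ[ℝ] ℝ) (d N : ℕ) (hd : 0 < d) (x K : ℝ) (hx0 : 0 < x)
    (hxd : (d : ℝ)⁻¹ < x ^ 2) (hK : 0 ≤ K)
    (hL : ∀ n ≤ N, |L (geron d n)| ≤ K * x ^ n) (n : ℕ) (hn : n ≤ N) :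
    |L (Chebyshev.S ℝ n)| ≤ K * x ^ 2 / (x ^ 2 - (d : ℝ)⁻¹) * x ^ n := by
  have hpos : 0 < x ^ 2 - (d : ℝ)⁻¹ := by linarith
  have hdi : 0 < (d : ℝ)⁻¹ := by positivity
  set K' := K * x ^ 2 / (x ^ 2 - (d : ℝ)⁻¹) with hK'
  have hKeq : K * x ^ 2 + (d : ℝ)⁻¹ * K' = K' * x ^ 2 := by
    have : K' * (x ^ 2 - (d : ℝ)⁻¹) = K * x ^ 2 := by rw [hK', div_mul_cancel₀ _ hpos.ne']
    linarith
  have hKK' : K ≤ K' := by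
    rw [hK', le_div_iff₀ hpos]; nlinarith
  induction n using Nat.twoStepInduction with
  | zero =>
    have := hL 0 hn
    simp only [geron, pow_zero, mul_one, Nat.cast_zero, Chebyshev.S_zero] at this ⊢
    linarith
  | one =>
    have := hL 1 hn
    simp only [geron, pow_one, Nat.cast_one, Chebyshev.S_one] at this ⊢
    exact this.trans (by gcongr)
  | more n ih1 _ =>
    have h1 := hL (n + 2) hn
    have h2 := ih1 (by omega)
    have h3 : Chebyshev.S ℝ ((n + 2 : ℕ) : ℤ) =
        geron d (n + 2) + ((d : ℝ)⁻¹) • Chebyshev.S ℝ (n : ℤ) := by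
      have := geron_succ_eq d (n + 1) hd
      push_cast at this ⊢
      rw [this]
      rw [show (n : ℤ) + 1 - 1 = n by ring, show (n : ℤ) + 1 + 1 = n + 2 by ring]
      ring
    rw [h3, map_add, map_smul, smul_eq_mul]
    calc _ ≤ |L (geron d (n + 2))| + (d : ℝ)⁻¹ * |L (Chebyshev.S ℝ (n : ℤ))| := by
          refine (abs_add_le _ _).trans (le_of_eq ?_)
          rw [abs_mul, abs_of_pos hdi]
      _ ≤ K * x ^ (n + 2) + (d : ℝ)⁻¹ * (K' * x ^ n) := by gcongr
      _ = (K * x ^ 2 + (d : ℝ)⁻¹ * K') * x ^ n := by ring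
      _ = K' * x ^ (n + 2) := by rw [hKeq]; ring

/-- Decay along the sphere polynomials passes to `C_n = S_n - S_{n-2}`. -/
lemma abs_C_le (L : ℝ[X] →ₗ[ℝ] ℝ) (d N : ℕ) (hd : 0 < d) (x K : ℝ) (hx0 : 0 < x)
    (hxd : (d : ℝ)⁻¹ < x ^ 2) (hK : 0 ≤ K)
    (hL : ∀ n ≤ N, |L (geron d n)| ≤ K * x ^ n) (n : ℕ) (hn : n ≤ N) :
    |L (Chebyshev.C ℝ n)| ≤ K * x ^ 2 / (x ^ 2 - (d : ℝ)⁻¹) * (1 + d) * x ^ n := by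
  have hS := abs_S_le L d N hd x K hx0 hxd hK hL
  have hpos : 0 < x ^ 2 - (d : ℝ)⁻¹ := by linarith
  have hd1 : (1 : ℝ) ≤ d := by exact_mod_cast hd
  have hdx : 1 ≤ d * x ^ 2 := by
    have h : (d : ℝ) * (d : ℝ)⁻¹ = 1 := by field_simp
    nlinarith
  set K' := K * x ^ 2 / (x ^ 2 - (d : ℝ)⁻¹) with hK'
  have hK'0 : 0 ≤ K' := by positivity
  match n, hn with
  | 0, hn =>
    have := hS 0 hn
    have h2 : (2 : ℝ[X]) = (2 : ℝ) • 1 := by rw [two_smul]; norm_num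
    simp only [pow_zero, mul_one, Nat.cast_zero, Chebyshev.S_zero, Chebyshev.C_zero] at this ⊢
    rw [h2, map_smul, smul_eq_mul, abs_mul, abs_two]
    nlinarith
  | 1, hn =>
    have := hS 1 hn
    simp only [pow_one, Nat.cast_one, Chebyshev.S_one, Chebyshev.C_one] at this ⊢
    have : 0 ≤ K' * d * x := by positivity
    nlinarith
  | n + 2, hn =>
    have h1 := hS (n + 2) hn
    have h2 := hS n (by omega)
    have h3 : Chebyshev.C ℝ ((n + 2 : ℕ) : ℤ) =
        Chebyshev.S ℝ ((n + 2 : ℕ) : ℤ) - Chebyshev.S ℝ (n : ℤ) := by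
      have e1 := Chebyshev.C_eq_S_sub_X_mul_S ℝ ((n : ℤ) + 2)
      have e2 := Chebyshev.S_add_two ℝ (n : ℤ)
      push_cast
      rw [show (n : ℤ) + 2 - 1 = n + 1 by ring] at e1
      linear_combination e1 + e2
    rw [h3, map_sub]
    calc _ ≤ K' * x ^ (n + 2) + K' * x ^ n * 1 := by
          rw [mul_one]; exact (abs_sub _ _).trans (add_le_add h1 h2)
      _ ≤ K' * x ^ (n + 2) + K' * x ^ n * (d * x ^ 2) := by gcongr
      _ = _ := by ring

/-! ### Quadratic forms of polynomials in a symmetric operator -/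

lemma Td_symm (d : ℕ) {V : Type*} [Fintype V] (G : SimpleGraph V)
    [∀ v, Fintype (G.neighborSet v)] (f g : V → ℝ) :
    Td d G f ⬝ᵥ g = f ⬝ᵥ Td d G g := by
  classical
  simp only [dotProduct, Td, LinearMap.coe_mk, AddHom.coe_mk, Finset.mul_sum, Finset.sum_mul]
  have key : ∀ F : V → V → ℝ, ∑ x, ∑ y ∈ G.neighborFinset x, F x y =
      ∑ x, ∑ y, if G.Adj x y then F x y else 0 := by
    intro F
    refine Finset.sum_congr rfl fun x _ => ?_
    rw [← Finset.sum_filter]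
    refine Finset.sum_congr ?_ fun _ _ => rfl
    ext y; simp
  rw [key, key, Finset.sum_comm]
  refine Finset.sum_congr rfl fun x _ => Finset.sum_congr rfl fun y _ => ?_
  simp only [G.adj_comm y x]
  split_ifs
  · ring
  · rfl

lemma aeval_symm {V : Type*} [Fintype V] (T : Module.End ℝ (V → ℝ))
    (hT : ∀ f g, T f ⬝ᵥ g = f ⬝ᵥ T g) (P : ℝ[X]) (f g : V → ℝ) :
    aeval T P f ⬝ᵥ g = f ⬝ᵥ aeval T P g := by
  induction P using Polynomial.induction_on generalizing f g with
  | C a => simp [Module.algebraMap_end_apply]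
  | add p q hp hq => simp [add_dotProduct, dotProduct_add, hp, hq]
  | monomial n a h =>
    rw [pow_succ, ← mul_assoc, map_mul, aeval_X]
    have hc : aeval T (C a * X ^ n) * T = T * aeval T (C a * X ^ n) := by
      have := congrArg (aeval T) (mul_comm (C a * X ^ n) (X : ℝ[X]))
      rwa [map_mul _ (C a * X ^ n) X, map_mul _ X, aeval_X] at this
    rw [Module.End.mul_apply, h, hT, ← Module.End.mul_apply, ← hc, Module.End.mul_apply]

lemma aeval_eigen {V : Type*} (T : Module.End ℝ (V → ℝ)) (φ : V → ℝ) (lam : ℝ)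
    (h : T φ = lam • φ) (P : ℝ[X]) : aeval T P φ = P.eval lam • φ := by
  induction P using Polynomial.induction_on with
  | C a => simp [Module.algebraMap_end_apply]
  | add p q hp hq => simp [add_smul, hp, hq]
  | monomial n a hn =>
    rw [pow_succ, ← mul_assoc, map_mul, aeval_X, Module.End.mul_apply, h, map_smul, hn]
    simp only [eval_mul, eval_C, eval_pow, eval_X, smul_smul]
    congr 1; ring

/-- The quadratic form `P ↦ ⟨P(T) f, f⟩` as a linear functional of the polynomial `P`. -/
noncomputable def quadForm {V : Type*} [Fintype V] (T : Module.End ℝ (V → ℝ)) (f : V → ℝ) :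
    ℝ[X] →ₗ[ℝ] ℝ where
  toFun P := aeval T P f ⬝ᵥ f
  map_add' P Q := by simp [add_dotProduct]
  map_smul' a P := by simp [smul_dotProduct]

lemma quadForm_apply {V : Type*} [Fintype V] (T : Module.End ℝ (V → ℝ)) (f : V → ℝ) (P : ℝ[X]) :
    quadForm T f P = aeval T P f ⬝ᵥ f := rfl

/-- For symmetric `T`, `⟨P(T)² f, f⟩ = ‖P(T) f‖²`, which is at least the squared component of `P(T) f`
along the unit eigenvector `φ`. -/
lemma quadForm_mul_self_ge {V : Type*} [Fintype V] (T : Module.End ℝ (V → ℝ))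
    (hT : ∀ f g, T f ⬝ᵥ g = f ⬝ᵥ T g) (f φ : V → ℝ) (lam : ℝ) (hφ : T φ = lam • φ)
    (hφ1 : φ ⬝ᵥ φ = 1) (P : ℝ[X]) :
    (P.eval lam) ^ 2 * (f ⬝ᵥ φ) ^ 2 ≤ quadForm T f (P * P) := by
  rw [quadForm_apply, map_mul, Module.End.mul_apply, aeval_symm T hT]
  have h1 : aeval T P f ⬝ᵥ φ = P.eval lam * (f ⬝ᵥ φ) := by
    rw [aeval_symm T hT, aeval_eigen T φ lam hφ, dotProduct_smul, smul_eq_mul]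
  have h2 := Finset.sum_mul_sq_le_sq_mul_sq Finset.univ (aeval T P f) φ
  have h3 : ∑ i, φ i ^ 2 = 1 := by
    rw [← hφ1]; exact Finset.sum_congr rfl fun i _ => by ring
  rw [h3, mul_one] at h2
  calc _ = (aeval T P f ⬝ᵥ φ) ^ 2 := by rw [h1]; ring
    _ ≤ _ := h2
    _ = _ := Finset.sum_congr rfl fun i _ => by ring

/-- The spectral side of the argument: testing the Fejér kernel `D²`, with `D` a dilated Dirichlet
kernel that is large at the eigenvalue, against `f` bounds the mass of `f` by the decay of the
sphere operators at radii at least `n₀`. -/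
lemma core {V : Type*} [Fintype V] (T : Module.End ℝ (V → ℝ))
    (hT : ∀ f g, T f ⬝ᵥ g = f ⬝ᵥ T g) (d N m n₀ : ℕ) (hd : 0 < d) (x K ε : ℝ) (hx0 : 0 < x)
    (hx1 : x ≤ 1) (hxd : (d : ℝ)⁻¹ < x ^ 2) (hK : 0 ≤ K) (hε : 0 < ε)
    (f φ : V → ℝ) (lam : ℝ) (hφ : T φ = lam • φ) (hφ1 : φ ⬝ᵥ φ = 1)
    (hfφ : f ⬝ᵥ φ = f ⬝ᵥ f) (hμ : ε < f ⬝ᵥ f)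
    (hb : ∀ n ≤ N, |aeval T (geron d n) f ⬝ᵥ f| ≤ K * x ^ n)
    (hm : 1 ≤ m * ε) (hN : 2 * m * (8 * m + 3) * n₀ ≤ N) :
    ε * (f ⬝ᵥ f) ≤
      (2 * m + 1) * (K * x ^ 2 / (x ^ 2 - (d : ℝ)⁻¹) * (1 + d) * x ^ n₀) := by
  set μ := f ⬝ᵥ f with hμdef
  have hμ0 : 0 < μ := hε.trans hμ
  obtain ⟨k, hk1, hk2, hk⟩ := exists_dilation lam m n₀
  set B := K * x ^ 2 / (x ^ 2 - (d : ℝ)⁻¹) * (1 + d) with hB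
  have hB0 : 0 ≤ B := by
    have : 0 < x ^ 2 - (d : ℝ)⁻¹ := by linarith
    positivity
  have hC := abs_C_le (quadForm T f) d N hd x K hx0 hxd hK hb
  rw [← hB] at hC
  have hterm : ∀ i ∈ Finset.Icc (-(m : ℤ)) m, ∀ j ∈ Finset.Icc (-(m : ℤ)) m,
      quadForm T f ((2 : ℝ) • Chebyshev.C ℝ (((k * n₀ : ℕ) : ℤ) * (i - j)))
        ≤ (if i = j then 4 * μ else 0) + 2 * (B * x ^ n₀) := by
    intro i hi j hj
    rw [Finset.mem_Icc] at hi hj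
    have hBx : 0 ≤ B * x ^ n₀ := by positivity
    rw [map_smul, smul_eq_mul]
    split_ifs with hij
    · have : quadForm T f 2 = 2 * μ := by
        have h2 : (2 : ℝ[X]) = (2 : ℝ) • 1 := by rw [two_smul]; norm_num
        rw [h2, map_smul, smul_eq_mul, quadForm_apply, map_one, Module.End.one_apply]
      rw [hij, sub_self, mul_zero, Chebyshev.C_zero, this]
      linarith
    · -- An off-diagonal frequency `n` lies between `n₀` and `N`.
      set n := (((k * n₀ : ℕ) : ℤ) * (i - j)).natAbs with hn
      have hn' : n = k * n₀ * (i - j).natAbs := by rw [hn, Int.natAbs_mul, Int.natAbs_natCast]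
      have ha1 : 1 ≤ (i - j).natAbs := by omega
      have ha2 : (i - j).natAbs ≤ 2 * m := by omega
      have hnN : n ≤ N := by
        rw [hn']
        calc k * n₀ * (i - j).natAbs ≤ (8 * m + 3) * n₀ * (2 * m) := by gcongr
          _ = 2 * m * (8 * m + 3) * n₀ := by ring
          _ ≤ N := hN
      have hnn : n₀ ≤ n := by
        rw [hn']
        calc n₀ = 1 * n₀ * 1 := by ring
          _ ≤ k * n₀ * (i - j).natAbs := by gcongr
      rw [← Chebyshev.C_natAbs, ← hn]
      have h1 := (le_abs_self _).trans (hC n hnN)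
      have h2 : B * x ^ n ≤ B * x ^ n₀ :=
        mul_le_mul_of_nonneg_left (pow_le_pow_of_le_one hx0.le hx1 hnn) hB0
      linarith
  have hupper : quadForm T f (dirichletPoly m (k * n₀) * dirichletPoly m (k * n₀)) ≤
      (2 * m + 1) * (4 * μ) + (2 * m + 1) * ((2 * m + 1) * (2 * (B * x ^ n₀))) := by
    rw [dirichletPoly_sq]
    simp only [map_sum]
    refine (Finset.sum_le_sum fun i hi => Finset.sum_le_sum fun j hj =>
      hterm i hi j hj).trans (le_of_eq ?_)
    simp only [Finset.sum_add_distrib, Finset.sum_const, nsmul_eq_mul, card_Icc_neg,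
      Finset.sum_ite_eq]
    congr 1
    rw [← Finset.sum_filter, Finset.filter_mem_eq_inter, Finset.inter_self, Finset.sum_const,
      nsmul_eq_mul, card_Icc_neg]
  have hlower := quadForm_mul_self_ge T hT f φ lam hφ hφ1 (dirichletPoly m (k * n₀))
  rw [hfφ] at hlower
  have h1 : 2 * (2 * (m : ℝ) + 1) ^ 2 * μ ^ 2 ≤
      (2 * m + 1) * (4 * μ) + (2 * m + 1) * ((2 * m + 1) * (2 * (B * x ^ n₀))) :=
    (mul_le_mul_of_nonneg_right hk (sq_nonneg _)).trans (hlower.trans hupper)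
  have hM : (0 : ℝ) < 2 * (2 * m + 1) := by positivity
  have h2 : (2 * (m : ℝ) + 1) * μ ^ 2 ≤ 2 * μ + (2 * m + 1) * (B * x ^ n₀) := by
    refine le_of_mul_le_mul_left ?_ hM
    linarith
  have h3 : (2 + ε) * μ ≤ (2 * (m : ℝ) + 1) * μ ^ 2 := by
    have : 2 + ε ≤ (2 * (m : ℝ) + 1) * μ := by
      have : (2 * (m : ℝ) + 1) * ε ≤ (2 * (m : ℝ) + 1) * μ := by gcongr
      linarith
    nlinarith
  linarith

/-! ### Hölder estimates -/

lemma holder {V : Type*} [Fintype V] (p q : ℝ≥0∞) (hp1 : 1 ≤ p) (hp2 : p < 2)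
    (hpq : 1 / p + 1 / q = 1) (f g : V → ℝ) :
    |g ⬝ᵥ f| ≤ lpNorm q g * lpNorm p f := by
  have hptop : p ≠ ∞ := (hp2.trans (by simp)).ne
  have hle : |g ⬝ᵥ f| ≤ ∑ i, |g i| * |f i| := by
    refine (Finset.abs_sum_le_sum_abs _ _).trans (le_of_eq ?_)
    exact Finset.sum_congr rfl fun i _ => abs_mul _ _
  refine hle.trans ?_
  by_cases hq : q = ∞
  · have hp : p = 1 := by simpa [hq] using hpq
    subst hp; subst hq
    simp only [lpNorm, if_true, ENNReal.one_ne_top, if_false, ENNReal.toReal_one, Real.rpow_one,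
      div_one, Finset.mul_sum]
    exact Finset.sum_le_sum fun i _ => mul_le_mul_of_nonneg_right
      (le_ciSup (f := fun x => |g x|) (Set.finite_range _).bddAbove i) (abs_nonneg _)
  · have hp0 : p ≠ 0 := (one_pos.trans_le hp1).ne'
    have hq0 : q ≠ 0 := by
      rintro rfl
      simp at hpq
    have hpr : 0 < p.toReal := ENNReal.toReal_pos hp0 hptop
    have hqr : 0 < q.toReal := ENNReal.toReal_pos hq0 hq
    have hconj : p.toReal⁻¹ + q.toReal⁻¹ = 1 := by
      have := congrArg ENNReal.toReal hpq
      rw [ENNReal.toReal_add (by simp [hp0]) (by simp [hq0])] at this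
      simpa using this
    have hH : Real.HolderConjugate q.toReal p.toReal :=
      (Real.holderConjugate_iff).mpr ⟨by
        by_contra hle1
        have h1 : 1 ≤ q.toReal⁻¹ := (one_le_inv₀ hqr).mpr (not_lt.mp hle1)
        have : 0 < p.toReal⁻¹ := inv_pos.mpr hpr
        linarith, by linarith⟩
    have := Real.inner_le_Lp_mul_Lq Finset.univ (fun i => |g i|) (fun i => |f i|) hH
    simpa [lpNorm, hq, hptop] using this

/-- A function restricted to `E` satisfies `‖f‖_p² ≤ |E|^{2/p-1} ‖f‖_2²`. -/
lemma lpNorm_sq_le {V : Type*} [Fintype V] [DecidableEq V] (p : ℝ≥0∞) (hp1 : 1 ≤ p) (hp2 : p < 2)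
    (φ : V → ℝ) (E : Finset V) :
    lpNorm p (fun x => if x ∈ E then φ x else 0) ^ 2 ≤
      (E.card : ℝ) ^ ((2 - p.toReal) / p.toReal) * ∑ x ∈ E, φ x ^ 2 := by
  have hptop : p ≠ ∞ := (hp2.trans (by simp)).ne
  have hp0 : p ≠ 0 := (one_pos.trans_le hp1).ne'
  have hpr : 0 < p.toReal := ENNReal.toReal_pos hp0 hptop
  have hpr2 : p.toReal ≤ 2 := by
    simpa using ENNReal.toReal_mono (by simp) hp2.le
  have h1 : ∑ x, |(if x ∈ E then φ x else 0)| ^ p.toReal = ∑ x ∈ E, |φ x| ^ p.toReal := by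
    rw [← Finset.sum_filter_add_sum_filter_not Finset.univ (· ∈ E)]
    have hz : ∑ x with ¬ x ∈ E, |(if x ∈ E then φ x else 0)| ^ p.toReal = 0 := by
      refine Finset.sum_eq_zero fun x hx => ?_
      rw [if_neg (Finset.mem_filter.mp hx).2, abs_zero, Real.zero_rpow hpr.ne']
    rw [hz, add_zero]
    refine Finset.sum_congr (by ext; simp) fun x hx => by rw [if_pos hx]
  have h2 := Real.rpow_sum_le_const_mul_sum_rpow_of_nonneg E (f := fun x => |φ x| ^ p.toReal)
    (p := 2 / p.toReal) (by rwa [le_div_iff₀ hpr, one_mul]) (fun i _ => by positivity)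
  simp only [lpNorm, if_neg hptop, h1]
  rw [← Real.rpow_natCast, ← Real.rpow_mul (by positivity)]
  have e1 : 1 / p.toReal * ((2 : ℕ) : ℝ) = 2 / p.toReal := by push_cast; ring
  have e2 : (2 - p.toReal) / p.toReal = 2 / p.toReal - 1 := by field_simp
  rw [e1, e2]
  refine h2.trans (le_of_eq ?_)
  congr 1
  refine Finset.sum_congr rfl fun x _ => ?_
  rw [← Real.rpow_mul (abs_nonneg _), mul_div_cancel₀ _ hpr.ne', ← sq_abs (φ x)]
  norm_num

/-! ### The lower bound `d^{-n/2}` for the norm of a sphere operator -/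

/-- The constant function has eigenvalue `(d+1)/√d`, and the sphere of radius `n + 1` in the tree has
`(d+1) d^n` points. -/
lemma geron_eval_top (d n : ℕ) (hd : 0 < d) :
    √(d : ℝ) ^ (n + 1) * (geron d (n + 1)).eval (((d : ℝ) + 1) / √d) = (d + 1) * (d : ℝ) ^ n := by
  have hs : √(d : ℝ) ≠ 0 := by positivity
  have hs2 : √(d : ℝ) ^ 2 = d := Real.sq_sqrt (by positivity)
  have hd' : (d : ℝ) ≠ 0 := by positivity
  induction n using Nat.twoStepInduction with
  | zero => simp [geron]; field_simp
  | one =>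
    simp only [geron, eval_sub, eval_pow, eval_X, eval_C]
    rw [div_pow, hs2]
    field_simp
    ring
  | more n ih1 ih2 =>
    rw [geron]
    simp only [eval_sub, eval_mul, eval_X]
    have h1 : √(d : ℝ) ^ (n + 2 + 1) * (((d : ℝ) + 1) / √d * (geron d (n + 2)).eval (((d : ℝ) + 1) / √d)
        - (geron d (n + 1)).eval (((d : ℝ) + 1) / √d)) =
        (d + 1) * (√(d : ℝ) ^ (n + 1 + 1) * (geron d (n + 1 + 1)).eval (((d : ℝ) + 1) / √d))
        - √(d : ℝ) ^ 2 * (√(d : ℝ) ^ (n + 1) * (geron d (n + 1)).eval (((d : ℝ) + 1) / √d)) := by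
      field_simp
      ring
    rw [h1, ih1, ih2, hs2]
    ring

lemma sqrt_mul_Td (d : ℕ) (hd : 0 < d) {V : Type*} (G : SimpleGraph V)
    [∀ v, Fintype (G.neighborSet v)] (f : V → ℝ) (y : V) :
    √(d : ℝ) * Td d G f y = ∑ z ∈ G.neighborFinset y, f z := by
  have hs : √(d : ℝ) ≠ 0 := by positivity
  simp only [Td, LinearMap.coe_mk, AddHom.coe_mk]
  rw [← mul_assoc, mul_inv_cancel₀ hs, one_mul]

/-- `d^{n/2} S_n` has integer matrix entries. -/
lemma sphere_integral (d : ℕ) (hd : 0 < d) {V : Type*} (G : SimpleGraph V)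
    [∀ v, Fintype (G.neighborSet v)] (f : V → ℤ) (n : ℕ) :
    ∃ a : V → ℤ, ∀ y, √(d : ℝ) ^ n * aeval (Td d G) (geron d n) (fun z => (f z : ℝ)) y = a y := by
  have hs2 : √(d : ℝ) ^ 2 = d := Real.sq_sqrt (by positivity)
  have hd' : (d : ℝ) ≠ 0 := by positivity
  set T := Td d G with hT
  set F : V → ℝ := fun z => (f z : ℝ) with hF
  -- The rescaled operator `√d T` is the adjacency operator, which preserves integrality.
  have step : ∀ (n : ℕ) (g : V → ℝ) (a : V → ℤ), (∀ y, √(d : ℝ) ^ n * g y = a y) →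
      ∀ y, √(d : ℝ) ^ (n + 1) * T g y = ((∑ z ∈ G.neighborFinset y, a z : ℤ) : ℝ) := by
    intro n g a h y
    rw [pow_succ, mul_assoc, hT, sqrt_mul_Td d hd, Finset.mul_sum, Int.cast_sum]
    exact Finset.sum_congr rfl fun z _ => h z
  have h0 : ∀ y, √(d : ℝ) ^ 0 * F y = f y := fun y => by simp [hF]
  have h1 := step 0 F f h0
  induction n using Nat.strong_induction_on with
  | _ n ih =>
    match n, ih with
    | 0, _ => exact ⟨f, by simpa [geron] using h0⟩
    | 1, _ => exact ⟨fun y => ∑ z ∈ G.neighborFinset y, f z, by simpa [geron] using h1⟩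
    | 2, _ =>
      refine ⟨fun y => (∑ z ∈ G.neighborFinset y, ∑ w ∈ G.neighborFinset z, f w) -
        (d + 1) * f y, fun y => ?_⟩
      have h2 := step 1 (T F) _ h1 y
      simp only [geron, map_sub, map_pow, aeval_X, aeval_C, LinearMap.sub_apply,
        Module.algebraMap_end_apply, Pi.sub_apply, Pi.smul_apply, smul_eq_mul, pow_two T,
        Module.End.mul_apply]
      rw [mul_sub, h2, hs2]
      push_cast
      rw [← mul_assoc, mul_div_cancel₀ _ hd']
    | n + 3, ih =>
      obtain ⟨a, ha⟩ := ih (n + 1) (by omega)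
      obtain ⟨b, hb⟩ := ih (n + 2) (by omega)
      refine ⟨fun y => (∑ z ∈ G.neighborFinset y, b z) - d * a y, fun y => ?_⟩
      have h2 := step (n + 2) _ b hb y
      simp only [geron, map_sub, map_mul, aeval_X, LinearMap.sub_apply, Pi.sub_apply,
        Module.End.mul_apply]
      rw [mul_sub, h2]
      push_cast
      rw [← ha y]
      linear_combination (-(√(d : ℝ) ^ (n + 1) * aeval T (geron d (n + 1)) F y)) * hs2

lemma abs_le_lpNorm {V : Type*} [Fintype V] (q : ℝ≥0∞) (hq : 1 ≤ q) (g : V → ℝ) (y : V) :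
    |g y| ≤ lpNorm q g := by
  rw [lpNorm]
  split_ifs with h
  · exact le_ciSup (f := fun x => |g x|) (Set.finite_range _).bddAbove y
  · have hqr : 0 < q.toReal := ENNReal.toReal_pos (one_pos.trans_le hq).ne' h
    calc |g y| = (|g y| ^ q.toReal) ^ (1 / q.toReal) := by
          rw [← Real.rpow_mul (abs_nonneg _), mul_one_div_cancel hqr.ne', Real.rpow_one]
      _ ≤ _ := by
          refine Real.rpow_le_rpow (by positivity) ?_ (by positivity)
          exact Finset.single_le_sum (f := fun x => |g x| ^ q.toReal) (fun i _ => by positivity)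
            (Finset.mem_univ y)

/-- Since `d^{n/2} S_n δ_x` is integer valued and nonzero, `‖S_n‖_{p → q} ≥ d^{-n/2}`. -/
lemma one_le_sphere {V : Type*} [Fintype V] (p q : ℝ≥0∞) (hp1 : 1 ≤ p) (hp : p ≠ ∞) (hq : 1 ≤ q)
    (d n : ℕ) (hd : 0 < d) (hn : 0 < n) (G : SimpleGraph V) [DecidableRel G.Adj]
    (hG : G.IsRegularOfDegree (d + 1)) (x : V) (R : ℝ)
    (h : ∀ f : V → ℝ, lpNorm q (aeval (Td d G) (geron d n) f) ≤ R * lpNorm p f) :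
    1 ≤ √(d : ℝ) ^ n * R := by
  classical
  have hs : 0 < √(d : ℝ) := by positivity
  have hpr : 0 < p.toReal := ENNReal.toReal_pos (one_pos.trans_le hp1).ne' hp
  set δ : V → ℤ := Pi.single x 1 with hδ
  set F : V → ℝ := fun z => (δ z : ℝ) with hF
  have hFx : F = Pi.single x 1 := by
    funext z
    by_cases hz : z = x
    · subst hz; simp [hF, hδ]
    · simp [hF, hδ, hz]
  have hF1 : lpNorm p F = 1 := by
    rw [lpNorm, if_neg hp, Finset.sum_eq_single x]
    · simp [hFx]
    · intro b _ hb; simp [hFx, hb, hpr.ne']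
    · simp
  obtain ⟨a, ha⟩ := sphere_integral d hd G δ n
  have hone : Td d G (fun _ => 1) = (((d : ℝ) + 1) / √d) • (fun _ => (1 : ℝ)) := by
    funext y
    simp [Td, hG.degree_eq y]
    field_simp
  -- Pairing with the constant eigenfunction shows that `S_n δ_x` does not vanish.
  have hne : ∃ y, a y ≠ 0 := by
    by_contra! hall
    have h1 := aeval_symm (Td d G) (Td_symm d G) (geron d n) F (fun _ => 1)
    rw [aeval_eigen _ _ _ hone] at h1
    have h2 : aeval (Td d G) (geron d n) F = 0 := by
      funext y
      have := ha y
      rw [hall y, Int.cast_zero] at this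
      simpa [hs.ne'] using this
    obtain ⟨k, rfl⟩ : ∃ k, n = k + 1 := ⟨n - 1, by omega⟩
    have h3 := geron_eval_top d k hd
    rw [h2, zero_dotProduct, hFx, single_dotProduct] at h1
    simp only [Pi.smul_apply, smul_eq_mul, mul_one, one_mul] at h1
    rw [← h1, mul_zero] at h3
    have : (0 : ℝ) < (d + 1) * (d : ℝ) ^ k := by positivity
    linarith
  obtain ⟨y, hy⟩ := hne
  have h1 : (1 : ℝ) ≤ |(a y : ℝ)| := by exact_mod_cast Int.one_le_abs hy
  rw [← ha y, abs_mul, abs_of_pos (by positivity)] at h1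
  have h2 := (abs_le_lpNorm q hq _ y).trans (h F)
  rw [hF1, mul_one] at h2
  exact h1.trans (mul_le_mul_of_nonneg_left h2 (by positivity))

/-! ### Assembling the estimate -/

lemma dotProduct_self_of_lpNorm_two {V : Type*} [Fintype V] (φ : V → ℝ) (h : lpNorm 2 φ = 1) :
    φ ⬝ᵥ φ = 1 := by
  rw [lpNorm, if_neg (by simp)] at h
  have h1 : ∑ x, |φ x| ^ (2 : ℝ≥0∞).toReal = φ ⬝ᵥ φ := by
    refine Finset.sum_congr rfl fun x _ => ?_
    rw [ENNReal.toReal_ofNat, Real.rpow_ofNat, sq_abs, sq]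
  rw [h1] at h
  have h0 : 0 ≤ φ ⬝ᵥ φ := Finset.sum_nonneg fun i _ => mul_self_nonneg _
  exact (Real.rpow_left_inj h0 zero_le_one (by simp)).mp
    (h.trans (Real.one_rpow (1 / (2 : ℝ≥0∞).toReal)).symm)

lemma restrict_dotProduct_self {V : Type*} [Fintype V] [DecidableEq V] (φ : V → ℝ)
    (E : Finset V) :
    (fun x => if x ∈ E then φ x else 0) ⬝ᵥ (fun x => if x ∈ E then φ x else 0) =
      ∑ x ∈ E, φ x ^ 2 := by
  have h : ∀ x, (if x ∈ E then φ x else 0) * (if x ∈ E then φ x else 0) =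
      if x ∈ E then φ x ^ 2 else 0 := by
    intro x; split_ifs
    · ring
    · ring
  simp only [dotProduct, h, Finset.sum_ite_mem, Finset.univ_inter]

/-- For `α > 3/4` the hypothesis at radius `N` reads `d^{-N/2} ≤ C d^{-αN}`, which bounds `d^N`;
the claim then only says that `E` is nonempty. -/
lemma delocalization_of_large_exponent (p q : ℝ≥0∞) (hp1 : 1 ≤ p) (hptop : p ≠ ∞) (hq : 1 ≤ q)
    (hpr2 : p.toReal < 2) (C : ℝ) (hC : 0 < C) (α : ℝ) (hα1 : 3 / 4 < α) (ε : ℝ) (hε0 : 0 < ε)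
    (d : ℕ) (hd : 2 ≤ d) :
    ∃ c : ℝ, 0 < c ∧
      ∀ (N : ℕ), 0 < N →
      ∀ (V : Type) (_ : Fintype V) (G : SimpleGraph V) (_ : DecidableRel G.Adj),
        G.IsRegularOfDegree (d + 1) →
        (∀ n : ℕ, n ≤ N → ∀ f : V → ℝ,
          lpNorm q (aeval (Td d G) (geron d n) f) ≤ C * (d : ℝ) ^ (-(α * n)) * lpNorm p f) →
        ∀ (φ : V → ℝ) (lam : ℝ), Td d G φ = lam • φ → lpNorm 2 φ = 1 →
        ∀ E : Finset V, ε < ∑ x ∈ E, (φ x) ^ 2 →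
          c * (d : ℝ) ^ ((2 ^ (7 : ℕ) : ℝ)⁻¹ * (α * p.toReal * ε ^ 2 / (2 - p.toReal)) * N)
            ≤ (E.card : ℝ) := by
  have hd0 : 0 < d := by omega
  have hdr : (0 : ℝ) < d := by positivity
  have hdr1 : (1 : ℝ) < d := by exact_mod_cast hd
  have hP0 : 0 < p.toReal := ENNReal.toReal_pos (one_pos.trans_le hp1).ne' hptop
  set P := p.toReal with hP
  have h2P : 0 < 2 - P := by linarith
  set κ : ℝ := (2 ^ (7 : ℕ) : ℝ)⁻¹ * (P * ε ^ 2 / (2 - P)) with hκ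
  have hκ0 : 0 < κ := by positivity
  refine ⟨(C ^ (3 * κ))⁻¹, by positivity, ?_⟩
  intro N hN V _ G _ hG hS φ lam hφ hφ1 E hE
  have hEne : E.Nonempty := by
    rw [Finset.nonempty_iff_ne_empty]
    rintro rfl
    simp only [Finset.sum_empty] at hE; linarith
  obtain ⟨v, -⟩ := id hEne
  have hcard : (1 : ℝ) ≤ E.card := by exact_mod_cast hEne.card_pos
  have h1 := one_le_sphere p q hp1 hptop hq d N hd0 hN G hG v _
    (hS N le_rfl)
  have h2 : (d : ℝ) ^ ((α - 1 / 2) * N) ≤ C := by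
    have e1 : √(d : ℝ) ^ N = (d : ℝ) ^ (N / 2 : ℝ) := by
      rw [Real.sqrt_eq_rpow, ← Real.rpow_natCast, ← Real.rpow_mul hdr.le]
      congr 1; ring
    have e2 : (d : ℝ) ^ ((α - 1 / 2) * N) * ((d : ℝ) ^ (N / 2 : ℝ) * (d : ℝ) ^ (-(α * N))) = 1 := by
      rw [← Real.rpow_add hdr, ← Real.rpow_add hdr]
      ring_nf; exact Real.rpow_zero _
    rw [e1] at h1
    have h3 := mul_le_mul_of_nonneg_left h1
      (by positivity : 0 ≤ (d : ℝ) ^ ((α - 1 / 2) * N))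
    calc (d : ℝ) ^ ((α - 1 / 2) * N) = (d : ℝ) ^ ((α - 1 / 2) * N) * 1 := (mul_one _).symm
      _ ≤ (d : ℝ) ^ ((α - 1 / 2) * N) *
            ((d : ℝ) ^ (N / 2 : ℝ) * (C * (d : ℝ) ^ (-(α * N)))) := h3
      _ = C := by linear_combination C * e2
  refine le_trans ?_ hcard
  rw [inv_mul_le_iff₀ (by positivity), mul_one]
  calc _ ≤ (d : ℝ) ^ ((α - 1 / 2) * N * (3 * κ)) := by
        refine Real.rpow_le_rpow_of_exponent_le hdr1.le ?_
        calc _ = κ * N * α := by rw [hκ]; ring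
          _ ≤ κ * N * (3 * (α - 1 / 2)) := by gcongr; linarith
          _ = _ := by ring
    _ = ((d : ℝ) ^ ((α - 1 / 2) * N)) ^ (3 * κ) := Real.rpow_mul hdr.le _ _
    _ ≤ C ^ (3 * κ) := by gcongr

/-- All frequencies of the Fejér kernel stay at most `N`. -/
lemma radius_le (N m n₀ : ℕ) (ε : ℝ) (hε0 : 0 < ε) (hε1 : ε < 1) (hm2 : (m : ℝ) ≤ 1 / ε + 1)
    (hn1 : (n₀ : ℝ) ≤ N * ε ^ 2 / 80) : 2 * m * (8 * m + 3) * n₀ ≤ N := by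
  have h1 : (m : ℝ) * ε ≤ 1 + ε := by
    calc (m : ℝ) * ε ≤ (1 / ε + 1) * ε := by gcongr
      _ = 1 + ε := by field_simp
  have h2 : 2 * (m * ε) * (8 * (m * ε) + 3 * ε) ≤ 80 := by
    have : 0 ≤ (m : ℝ) * ε := by positivity
    nlinarith
  have h3 : ((2 * m * (8 * m + 3) * n₀ : ℕ) : ℝ) ≤ N := by
    push_cast
    calc 2 * (m : ℝ) * (8 * m + 3) * n₀ ≤ 2 * (m : ℝ) * (8 * m + 3) * (N * ε ^ 2 / 80) := by
          gcongr
      _ = (2 * (m * ε) * (8 * (m * ε) + 3 * ε)) * (N / 80) := by ring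
      _ ≤ 80 * (N / 80) := by gcongr
      _ = N := by ring
  exact_mod_cast h3

/-- **Theorem 1** (Brooks–Lindenstrauss, delocalization of eigenfunctions on large regular
graphs, `L^p → L^q` form). If every sphere operator `S_n`, `n ≤ N`, has
`‖S_n‖_{L^p(G)→L^q(G)} ≤ C d^{-α n}` for a conjugate pair `1 ≤ p < 2 < q ≤ ∞`, then any set `E`
carrying more than `ε` of the `L²` mass of an `L²`-normalized eigenfunction of `T_d` satisfies
`|E| ≥ c d^{δ N}` with `δ = 2⁻⁷ α p ε² / (2 - p)`. -/
theorem delocalization_LpLq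
    (p q : ℝ≥0∞) (hp1 : 1 ≤ p) (hp2 : p < 2) (hq2 : 2 < q) (hqtop : q ≤ ∞)
    (hpq : 1 / p + 1 / q = 1)
    (C : ℝ) (hC : 0 < C) (α : ℝ) (hα : 0 < α) (ε : ℝ) (hε : ε ∈ Set.Ioo (0 : ℝ) 1)
    (d : ℕ) (hd : 2 ≤ d) :
    ∃ c : ℝ, 0 < c ∧
      ∀ (N : ℕ), 0 < N →
      ∀ (V : Type) (_ : Fintype V) (G : SimpleGraph V) (_ : DecidableRel G.Adj),
        G.IsRegularOfDegree (d + 1) →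
        (∀ n : ℕ, n ≤ N → ∀ f : V → ℝ,
          lpNorm q (aeval (Td d G) (geron d n) f) ≤ C * (d : ℝ) ^ (-(α * n)) * lpNorm p f) →
        ∀ (φ : V → ℝ) (lam : ℝ), Td d G φ = lam • φ → lpNorm 2 φ = 1 →
        ∀ E : Finset V, ε < ∑ x ∈ E, (φ x) ^ 2 →
          c * (d : ℝ) ^ ((2 ^ (7 : ℕ) : ℝ)⁻¹ * (α * p.toReal * ε ^ 2 / (2 - p.toReal)) * N)
            ≤ (E.card : ℝ) := by
  obtain ⟨hε0, hε1⟩ := hε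
  have hptop : p ≠ ∞ := (hp2.trans (by simp)).ne
  have hpr1 : 1 ≤ p.toReal := by simpa using ENNReal.toReal_mono hptop hp1
  have hpr2 : p.toReal < 2 := by
    simpa using (ENNReal.toReal_lt_toReal hptop (by simp)).mpr hp2
  set P := p.toReal with hP
  have hd0 : 0 < d := by omega
  have hdr : (0 : ℝ) < d := by positivity
  have hdr1 : (1 : ℝ) < d := by exact_mod_cast hd
  have h2P : 0 < 2 - P := by linarith
  have hP0 : 0 < P := by linarith
  rcases le_or_gt α (3 / 4) with hα1 | hα1
  · -- Radii start at about `ε²N/80`; as `80/128 = 5/8`, the decay rate `5α/8 < 1/2` is enough.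
    set x : ℝ := (d : ℝ) ^ (-(5 / 8 * α)) with hx
    have hx0 : 0 < x := by positivity
    have hx1 : x ≤ 1 := Real.rpow_le_one_of_one_le_of_nonpos hdr1.le (by linarith)
    have hxd : (d : ℝ)⁻¹ < x ^ 2 := by
      rw [hx, ← Real.rpow_natCast, ← Real.rpow_mul hdr.le, ← Real.rpow_neg_one]
      exact Real.rpow_lt_rpow_of_exponent_lt hdr1 (by push_cast; linarith)
    have hpos : 0 < x ^ 2 - (d : ℝ)⁻¹ := by linarith
    set m := ⌈1 / ε⌉₊ with hm
    set A : ℝ := (2 * m + 1) * (C * x ^ 2 / (x ^ 2 - (d : ℝ)⁻¹) * (1 + d)) with hA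
    have hA0 : 0 < A := by positivity
    have hm1 : 1 / ε ≤ m := Nat.le_ceil _
    have hm2 : (m : ℝ) ≤ 1 / ε + 1 := (Nat.ceil_lt_add_one (by positivity)).le
    have hmε : 1 ≤ m * ε := by rwa [div_le_iff₀ hε0] at hm1
    set s : ℝ := (2 - P) / P with hs
    have hs0 : 0 < s := by positivity
    set c₁ : ℝ := ε / (A * (d : ℝ) ^ (5 / 8 * α)) with hc₁
    have hc₁0 : 0 < c₁ := by positivity
    refine ⟨c₁ ^ (1 / s), by positivity, ?_⟩
    intro N hN V _ G _ hG hS φ lam hφ hφ1 E hE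
    classical
    set f : V → ℝ := fun x => if x ∈ E then φ x else 0 with hf
    have hφ1' : φ ⬝ᵥ φ = 1 := dotProduct_self_of_lpNorm_two φ hφ1
    have hff : f ⬝ᵥ f = ∑ x ∈ E, φ x ^ 2 := restrict_dotProduct_self φ E
    have hfφ : f ⬝ᵥ φ = f ⬝ᵥ f := by
      refine Finset.sum_congr rfl fun x _ => ?_
      simp only [hf]; split_ifs <;> simp
    set μ := f ⬝ᵥ f with hμ
    rw [← hff] at hE
    have hμ0 : 0 < μ := hε0.trans hE
    set Q : ℝ := (E.card : ℝ) ^ s with hQ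
    have hQ0 : 0 ≤ Q := by positivity
    have hnorm : lpNorm p f ^ 2 ≤ Q * μ := by
      rw [hff]; exact lpNorm_sq_le p hp1 hp2 φ E
    have hb : ∀ n ≤ N, |aeval (Td d G) (geron d n) f ⬝ᵥ f| ≤ (C * (Q * μ)) * x ^ n := by
      intro n hn
      have hfn : 0 ≤ lpNorm p f := by rw [lpNorm, if_neg hptop]; positivity
      have hdx : (d : ℝ) ^ (-(α * n)) ≤ x ^ n := by
        rw [hx, ← Real.rpow_natCast, ← Real.rpow_mul hdr.le]
        refine Real.rpow_le_rpow_of_exponent_le hdr1.le ?_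
        have : 0 ≤ α * n := by positivity
        linarith
      calc _ ≤ lpNorm q (aeval (Td d G) (geron d n) f) * lpNorm p f :=
            holder p q hp1 hp2 hpq f _
        _ ≤ (C * (d : ℝ) ^ (-(α * n)) * lpNorm p f) * lpNorm p f := by gcongr; exact hS n hn f
        _ = C * lpNorm p f ^ 2 * (d : ℝ) ^ (-(α * n)) := by ring
        _ ≤ C * (Q * μ) * x ^ n := by gcongr
    set n₀ := ⌊(N : ℝ) * ε ^ 2 / 80⌋₊ with hn₀
    have hn1 : (n₀ : ℝ) ≤ N * ε ^ 2 / 80 := Nat.floor_le (by positivity)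
    have hn2 : N * ε ^ 2 / 80 - 1 ≤ (n₀ : ℝ) := (Nat.sub_one_lt_floor _).le
    have hNb : 2 * m * (8 * m + 3) * n₀ ≤ N := radius_le N m n₀ ε hε0 hε1 hm2 hn1
    have hcore := core (Td d G) (Td_symm d G) d N m n₀ hd0 x (C * (Q * μ)) ε hx0 hx1 hxd
      (by positivity) hε0 f φ lam hφ hφ1' hfφ hE hb hmε hNb
    have h1 : ε ≤ A * Q * x ^ n₀ := by
      refine le_of_mul_le_mul_right ?_ hμ0
      refine hcore.trans (le_of_eq ?_)
      rw [hA]; ring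
    have hxn : x ^ n₀ ≤ (d : ℝ) ^ (5 / 8 * α) * ((d : ℝ) ^ (α * ε ^ 2 * N / 128))⁻¹ := by
      rw [← Real.rpow_neg hdr.le, ← Real.rpow_add hdr, hx, ← Real.rpow_natCast,
        ← Real.rpow_mul hdr.le]
      refine Real.rpow_le_rpow_of_exponent_le hdr1.le ?_
      nlinarith
    have h2 : c₁ * (d : ℝ) ^ (α * ε ^ 2 * N / 128) ≤ Q := by
      have h3 : ε ≤ A * Q * ((d : ℝ) ^ (5 / 8 * α) * ((d : ℝ) ^ (α * ε ^ 2 * N / 128))⁻¹) :=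
        h1.trans (by gcongr)
      have hY : 0 < (d : ℝ) ^ (α * ε ^ 2 * N / 128) := by positivity
      have hZ : 0 < A * (d : ℝ) ^ (5 / 8 * α) := by positivity
      rw [hc₁, div_mul_eq_mul_div, div_le_iff₀ hZ]
      rw [← mul_assoc, ← div_eq_mul_inv, le_div_iff₀ hY] at h3
      linarith
    have hexp : (2 ^ (7 : ℕ) : ℝ)⁻¹ * (α * P * ε ^ 2 / (2 - P)) * N =
        α * ε ^ 2 * N / 128 * (1 / s) := by
      rw [hs, one_div_div]; ring
    calc _ = (c₁ * (d : ℝ) ^ (α * ε ^ 2 * N / 128)) ^ (1 / s) := by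
          rw [Real.mul_rpow hc₁0.le (by positivity), ← Real.rpow_mul hdr.le, hexp]
      _ ≤ Q ^ (1 / s) := by gcongr
      _ = E.card := by
          rw [hQ, ← Real.rpow_mul (by positivity), mul_one_div_cancel hs0.ne', Real.rpow_one]
  · exact delocalization_of_large_exponent p q hp1 hptop (one_le_two.trans hq2.le) hpr2 C hC α hα1
      ε hε0 d hd
end

section
/- Let n be a positive even integer. Then for every vertex x of the (d+1)-regular tree: P_n(T_d/2)δ_0(x) = 0 if |x| is odd or |x| > n; P_n(T_d/2)δ_0(x) = (1-d)/(2 d^{n/2}) if |x| < n and |x| is even; and P_n(T_d/2)δ_0(x) = 1/(2 d^{n/2}) if |x| = n. -/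
/-!
The function `P_n(T_d/2) δ_o` is radial for every `n`, and its radial profile is computed explicitly
(`chebProfile`) for all `n`, even or odd: for `n ≥ 1` it equals `1 / (2 d^{n/2})` on the sphere of
radius `n`, `(1 - d) / (2 d^{n/2})` on the smaller spheres whose radius has the parity of `n`, and
`0` elsewhere.

In a tree every vertex `x ≠ o` has exactly one neighbour closer to `o`, and its other `d` neighbours
are farther by one (`existsUnique_parent`). Hence `T_d` acts on radial functions as a three-term
operator on profiles (`sum_neighbors_radial`, `sum_neighbors_base`). The Chebyshev recursion
`P_{n+2} = 2 X P_{n+1} - P_n` becomes `f_{n+2} = T_d f_{n+1} - f_n`, and the explicit profiles satisfy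
the same recursion (`chebProfile_rec_zero`, `chebProfile_rec_succ`).
-/

open Polynomial Finset Real

/-- A vertex `x ≠ o` of a tree has exactly one neighbour closer to `o`: the penultimate vertex of
the path from `o` to `x`. -/
lemma existsUnique_parent {V : Type*} {T : SimpleGraph V} (hconn : T.Connected)
    (hacyc : T.IsAcyclic) {o x : V} (hx : x ≠ o) :
    ∃ p, T.Adj x p ∧ T.dist o p + 1 = T.dist o x ∧
      ∀ y, T.Adj x y → y ≠ p → T.dist o y = T.dist o x + 1 := by
  obtain ⟨p, hp, hlen⟩ := hconn.exists_path_of_dist o x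
  have hpos : 0 < T.dist o x := hconn.pos_dist_of_ne hx.symm
  have hnil : ¬ p.Nil := fun h => by
    have := SimpleGraph.Walk.length_eq_zero_iff.mpr h
    omega
  have step : ∀ y, T.Adj x y → T.dist o x = T.dist o y + 1 ∨ T.dist o y = T.dist o x + 1 :=
    fun y hy => by
      have h1 := hacyc.dist_ne_of_adj hy (hconn o x)
      have h2 := hy.diff_dist_adj (u := o)
      omega
  have hadj : T.Adj x p.penultimate := (p.adj_penultimate hnil).symm
  refine ⟨p.penultimate, hadj, ?_, fun y hy hne => ?_⟩
  · have h1 := SimpleGraph.dist_le p.dropLast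
    have h2 : p.dropLast.length = p.length - 1 := by simp
    rcases step _ hadj with h | h <;> omega
  · refine (step y hy).resolve_left fun h => hne ?_
    -- A closer neighbour `y` yields a geodesic through `y`, equal to `p` by uniqueness of paths.
    obtain ⟨q, -, hq⟩ := hconn.exists_path_of_dist o y
    have hqc : (q.concat hy.symm).IsPath :=
      SimpleGraph.Walk.isPath_of_length_eq_dist _ (by simp [hq, h])
    have := congrArg Subtype.val ((hacyc.subsingleton_path o x).elim ⟨p, hp⟩ ⟨_, hqc⟩)
    simp only at this
    rw [this]
    simp

/-- Neighbour sum of a radial function away from the base vertex. -/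
lemma sum_neighbors_radial {d : ℕ} {V : Type*} {T : SimpleGraph V}
    [∀ v, Fintype (T.neighborSet v)] (hconn : T.Connected) (hacyc : T.IsAcyclic)
    (hreg : ∀ v, T.degree v = d + 1) {o x : V} {k : ℕ} (hk : T.dist o x = k + 1) (g : ℕ → ℝ) :
    ∑ y ∈ T.neighborFinset x, g (T.dist o y) = g k + d * g (k + 2) := by
  classical
  have hx : x ≠ o := by
    rintro rfl
    simp at hk
  obtain ⟨p, hp, hdp, hother⟩ := existsUnique_parent hconn hacyc hx
  have hmem : p ∈ T.neighborFinset x := by simpa using hp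
  rw [← Finset.add_sum_erase _ _ hmem]
  have h1 : ∀ y ∈ (T.neighborFinset x).erase p, g (T.dist o y) = g (k + 2) := fun y hy => by
    rw [Finset.mem_erase, SimpleGraph.mem_neighborFinset] at hy
    rw [hother y hy.2 hy.1, hk]
  rw [Finset.sum_congr rfl h1, Finset.sum_const, Finset.card_erase_of_mem hmem,
    SimpleGraph.card_neighborFinset_eq_degree, hreg]
  have : T.dist o p = k := by omega
  simp [this]

/-- Neighbour sum of a radial function at the base vertex. -/
lemma sum_neighbors_base {d : ℕ} {V : Type*} {T : SimpleGraph V}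
    [∀ v, Fintype (T.neighborSet v)] (hreg : ∀ v, T.degree v = d + 1) (o : V) (g : ℕ → ℝ) :
    ∑ y ∈ T.neighborFinset o, g (T.dist o y) = (d + 1) * g 1 := by
  have h1 : ∀ y ∈ T.neighborFinset o, g (T.dist o y) = g 1 := fun y hy => by
    rw [SimpleGraph.mem_neighborFinset] at hy
    rw [SimpleGraph.dist_eq_one_iff_adj.mpr hy]
  rw [Finset.sum_congr rfl h1, Finset.sum_const, SimpleGraph.card_neighborFinset_eq_degree, hreg]
  simp

/-- The value of `P_n(T_d/2) δ_o` at distance `k` from `o`, written in terms of `s = √d`. -/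
noncomputable def chebProfile (s : ℝ) (n k : ℕ) : ℝ :=
  if n = 0 then (if k = 0 then 1 else 0)
  else if k = n then 1 / (2 * s ^ n)
  else if k < n ∧ k % 2 = n % 2 then (1 - s ^ 2) / (2 * s ^ n)
  else 0

lemma chebProfile_rec_zero {s : ℝ} (hs : s ≠ 0) (n : ℕ) :
    chebProfile s (n + 2) 0
      = s⁻¹ * ((s ^ 2 + 1) * chebProfile s (n + 1) 1) - chebProfile s n 0 := by
  rcases n with _ | n
  · simp [chebProfile]
    field_simp
    ring
  · rcases Nat.mod_two_eq_zero_or_one n with h | h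
    · have h1 : (n + 1) % 2 = 1 := by omega
      have h2 : (n + 1 + 1) % 2 = 0 := by omega
      have h3 : (n + 1 + 2) % 2 = 1 := by omega
      simp [chebProfile, h1, h2, h3]
    · have h1 : (n + 1) % 2 = 0 := by omega
      have h2 : (n + 1 + 1) % 2 = 1 := by omega
      have h3 : (n + 1 + 2) % 2 = 0 := by omega
      simp [chebProfile, h1, h2, h3]
      field_simp
      ring

lemma chebProfile_rec_succ {s : ℝ} (hs : s ≠ 0) (n k : ℕ) :
    chebProfile s (n + 2) (k + 1)
      = s⁻¹ * (chebProfile s (n + 1) k + s ^ 2 * chebProfile s (n + 1) (k + 2))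
        - chebProfile s n (k + 1) := by
  -- The identity depends on the parity of `n - k` and on the position of `k` relative to `n`.
  by_cases hpar : k % 2 = (n + 1) % 2
  · rcases lt_trichotomy k (n + 1) with hlt | heq | hgt
    · rcases Nat.lt_or_ge (k + 1) n with h | h
      · have e1 : chebProfile s (n + 2) (k + 1) = (1 - s ^ 2) / (2 * s ^ (n + 2)) := by
          grind [chebProfile]
        have e2 : chebProfile s (n + 1) k = (1 - s ^ 2) / (2 * s ^ (n + 1)) := by
          grind [chebProfile]
        have e3 : chebProfile s (n + 1) (k + 2) = (1 - s ^ 2) / (2 * s ^ (n + 1)) := by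
          grind [chebProfile]
        have e4 : chebProfile s n (k + 1) = (1 - s ^ 2) / (2 * s ^ n) := by
          grind [chebProfile]
        rw [e1, e2, e3, e4]
        field_simp
        ring
      · have hkn : n = k + 1 := by omega
        subst hkn
        have e1 : chebProfile s (k + 1 + 2) (k + 1) = (1 - s ^ 2) / (2 * s ^ (k + 3)) := by
          grind [chebProfile]
        have e2 : chebProfile s (k + 1 + 1) k = (1 - s ^ 2) / (2 * s ^ (k + 2)) := by
          grind [chebProfile]
        have e3 : chebProfile s (k + 1 + 1) (k + 2) = 1 / (2 * s ^ (k + 2)) := by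
          grind [chebProfile]
        have e4 : chebProfile s (k + 1) (k + 1) = 1 / (2 * s ^ (k + 1)) := by
          grind [chebProfile]
        rw [e1, e2, e3, e4]
        field_simp
        ring
    · subst heq
      have e1 : chebProfile s (n + 2) (n + 1 + 1) = 1 / (2 * s ^ (n + 2)) := by
        grind [chebProfile]
      have e2 : chebProfile s (n + 1) (n + 1) = 1 / (2 * s ^ (n + 1)) := by
        grind [chebProfile]
      have e3 : chebProfile s (n + 1) (n + 1 + 2) = 0 := by grind [chebProfile]
      have e4 : chebProfile s n (n + 1 + 1) = 0 := by grind [chebProfile]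
      rw [e1, e2, e3, e4]
      field_simp
      ring
    · have e1 : chebProfile s (n + 2) (k + 1) = 0 := by grind [chebProfile]
      have e2 : chebProfile s (n + 1) k = 0 := by grind [chebProfile]
      have e3 : chebProfile s (n + 1) (k + 2) = 0 := by grind [chebProfile]
      have e4 : chebProfile s n (k + 1) = 0 := by grind [chebProfile]
      rw [e1, e2, e3, e4]
      ring
  · have e1 : chebProfile s (n + 2) (k + 1) = 0 := by grind [chebProfile]
    have e2 : chebProfile s (n + 1) k = 0 := by grind [chebProfile]
    have e3 : chebProfile s (n + 1) (k + 2) = 0 := by grind [chebProfile]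
    have e4 : chebProfile s n (k + 1) = 0 := by grind [chebProfile]
    rw [e1, e2, e3, e4]
    ring

/-- `P_n(T_d/2) δ_o` is radial with profile `chebProfile (√d) n`, for every `n`. -/
lemma chebyshev_apply_eq_profile {d : ℕ} (hd : 2 ≤ d) {V : Type*} [DecidableEq V]
    {T : SimpleGraph V} [∀ v, Fintype (T.neighborSet v)]
    (hconn : T.Connected) (hacyc : T.IsAcyclic) (hreg : ∀ v, T.degree v = d + 1) (o : V) (n : ℕ) :
    aeval ((2 : ℝ)⁻¹ • Td d T) (Chebyshev.T ℝ (n : ℤ)) (fun y => if y = o then (1 : ℝ) else 0)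
      = fun x => chebProfile (Real.sqrt d) n (T.dist o x) := by
  have hd0 : (0 : ℝ) < d := by
    have : 0 < d := by omega
    exact_mod_cast this
  have hs : Real.sqrt d ≠ 0 := (Real.sqrt_pos.mpr hd0).ne'
  have hsq : Real.sqrt d ^ 2 = d := Real.sq_sqrt hd0.le
  have hδ : (fun y => if y = o then (1 : ℝ) else 0)
      = fun x => chebProfile (Real.sqrt d) 0 (T.dist o x) := by
    funext x
    simp only [chebProfile, if_true, hconn.dist_eq_zero_iff]
    simp only [eq_comm]
  have hT : ∀ (g : ℕ → ℝ) (x : V), Td d T (fun y => g (T.dist o y)) x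
      = (Real.sqrt d)⁻¹ * ∑ y ∈ T.neighborFinset x, g (T.dist o y) := fun g x => rfl
  induction n using Nat.twoStepInduction with
  | zero => simpa using hδ
  | one =>
    rw [hδ]
    funext x
    simp only [Nat.cast_one, Chebyshev.T_one, aeval_X, LinearMap.smul_apply, Pi.smul_apply, hT,
      smul_eq_mul]
    rcases hk : T.dist o x with _ | k
    · have hx : o = x := hconn.dist_eq_zero_iff.mp hk
      subst hx
      rw [sum_neighbors_base hreg]
      simp [chebProfile]
    · rw [sum_neighbors_radial hconn hacyc hreg hk]
      rcases k with _ | k <;> simp [chebProfile]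
      ring
  | more n ih0 ih1 =>
    have hrec : aeval ((2 : ℝ)⁻¹ • Td d T) (Chebyshev.T ℝ ((n + 2 : ℕ) : ℤ))
        = Td d T * aeval ((2 : ℝ)⁻¹ • Td d T) (Chebyshev.T ℝ ((n + 1 : ℕ) : ℤ))
          - aeval ((2 : ℝ)⁻¹ • Td d T) (Chebyshev.T ℝ (n : ℤ)) := by
      push_cast
      rw [Chebyshev.T_add_two, map_sub, map_mul, map_mul, aeval_X, map_ofNat]
      congr 2
      rw [mul_smul_comm, two_mul, ← two_smul ℝ (Td d T), smul_smul]
      norm_num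
    rw [hrec, LinearMap.sub_apply, Module.End.mul_apply, ih0, ih1]
    funext x
    rw [Pi.sub_apply, hT]
    rcases hk : T.dist o x with _ | k
    · have hx : o = x := hconn.dist_eq_zero_iff.mp hk
      subst hx
      rw [sum_neighbors_base hreg, chebProfile_rec_zero hs, hsq]
    · rw [sum_neighbors_radial hconn hacyc hreg hk, chebProfile_rec_succ hs, hsq]

/-- **Lemma 1** (Brooks–Lindenstrauss). On the `(d+1)`-regular tree, for `n` a positive even
integer, the matrix coefficients of `P_n(T_d/2)` (where `P_n` is the Chebyshev polynomial of the
first kind) are: `0` if `|x|` is odd or `|x| > n`; `(1-d)/(2 d^{n/2})` if `|x| < n` is even;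
and `1/(2 d^{n/2})` if `|x| = n`. Here `|x|` is the distance to the base vertex `o`. -/
theorem chebyshev_matrix_coefficients_tree
    (d : ℕ) (hd : 2 ≤ d) {V : Type*} [Infinite V] [DecidableEq V] (T : SimpleGraph V)
    [∀ v, Fintype (T.neighborSet v)]
    (hconn : T.Connected) (hacyc : T.IsAcyclic) (hreg : ∀ v, T.degree v = d + 1)
    (o : V) (n : ℕ) (hn : 0 < n) (hev : Even n) (x : V) :
    ((Odd (T.dist o x) ∨ n < T.dist o x) →
      aeval ((2 : ℝ)⁻¹ • Td d T) (Chebyshev.T ℝ (n : ℤ))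
        (fun y => if y = o then (1 : ℝ) else 0) x = 0) ∧
    ((T.dist o x < n ∧ Even (T.dist o x)) →
      aeval ((2 : ℝ)⁻¹ • Td d T) (Chebyshev.T ℝ (n : ℤ))
        (fun y => if y = o then (1 : ℝ) else 0) x = (1 - d) / (2 * (d : ℝ) ^ (n / 2))) ∧
    (T.dist o x = n →
      aeval ((2 : ℝ)⁻¹ • Td d T) (Chebyshev.T ℝ (n : ℤ))
        (fun y => if y = o then (1 : ℝ) else 0) x = 1 / (2 * (d : ℝ) ^ (n / 2))) := by
  rw [chebyshev_apply_eq_profile hd hconn hacyc hreg o n]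
  have hsq : Real.sqrt d ^ 2 = d := Real.sq_sqrt (Nat.cast_nonneg d)
  have hpow : Real.sqrt d ^ n = (d : ℝ) ^ (n / 2) := by
    conv_lhs => rw [← Nat.mul_div_cancel' hev.two_dvd, pow_mul, hsq]
  have hn0 : n ≠ 0 := hn.ne'
  have hn2 : n % 2 = 0 := Nat.even_iff.mp hev
  simp only [chebProfile, hn0, if_false, hpow, hsq, hn2]
  refine ⟨fun h => ?_, fun ⟨h1, h2⟩ => ?_, fun h => ?_⟩
  · rw [if_neg, if_neg]
    · rintro ⟨h1, h2⟩
      rcases h with h | h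
      · rw [Nat.odd_iff] at h
        omega
      · omega
    · rintro h1
      rcases h with h | h
      · rw [Nat.odd_iff] at h
        omega
      · omega
  · rw [if_neg h1.ne, if_pos ⟨h1, Nat.even_iff.mp h2⟩]
  · rw [if_pos h]
end

section
/- Let n be a positive even integer. Then for every vertex x of the (d+1)-regular tree, |P_n(T_d/2)δ_0(x)| ≤ ((d-1)/2)·d^{-n/2}. -/
/-!
The function `P_n(T_d/2) δ₀` is radial, so the Chebyshev recursion `P_{n+2} = 2 X P_{n+1} - P_n`
reduces to a recursion in the distance `k = |x|`. On the tree a vertex at distance `k ≥ 1` has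
exactly one neighbour at distance `k - 1` and `d` at distance `k + 1`, and `o` has `d + 1`
neighbours at distance `1` (`sum_radial_of_ne`, `sum_radial_root`). Solving the recursion gives, for
`n ≥ 1`, the closed form `P_n(T_d/2) δ₀(x) = chebCoeff d n |x| / (2 d^{n/2})`, where `chebCoeff` is
`1` on the sphere `|x| = n`, `1 - d` on the smaller spheres of the same parity as `n`, and `0`
elsewhere (`chebyshev_delta_eq`). The bound follows because `1 ≤ d - 1`.
-/

open Polynomial Finset Real

/-- Two neighbours of `x` that are both nearer to `o` coincide: each is the last vertex before `x`
on the unique path from `o` to `x`. -/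
lemma closer_neighbor_unique {V : Type*} {T : SimpleGraph V}
    (hconn : T.Connected) (hacyc : T.IsAcyclic) {o x y z : V}
    (hy : T.Adj x y) (hz : T.Adj x z)
    (hdy : T.dist o x = T.dist o y + 1) (hdz : T.dist o x = T.dist o z + 1) : y = z := by
  obtain ⟨p, hp⟩ := hconn.exists_walk_length_eq_dist o y
  obtain ⟨q, hq⟩ := hconn.exists_walk_length_eq_dist o z
  have hp' : (p.concat hy.symm).IsPath :=
    SimpleGraph.Walk.isPath_of_length_eq_dist _ (by simp [hp, hdy])
  have hq' : (q.concat hz.symm).IsPath :=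
    SimpleGraph.Walk.isPath_of_length_eq_dist _ (by simp [hq, hdz])
  have h : p.concat hy.symm = q.concat hz.symm :=
    congrArg Subtype.val ((hacyc.subsingleton_path o x).elim ⟨_, hp'⟩ ⟨_, hq'⟩)
  simpa using congrArg SimpleGraph.Walk.penultimate h

lemma exists_closer_neighbor {V : Type*} {T : SimpleGraph V}
    (hconn : T.Connected) {o x : V} (hx : x ≠ o) :
    ∃ y, T.Adj x y ∧ T.dist o x = T.dist o y + 1 := by
  obtain ⟨p, hp⟩ := hconn.exists_walk_length_eq_dist o x
  have hnil : ¬ p.Nil := fun h => hx h.eq.symm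
  have hadj := p.adj_penultimate hnil
  refine ⟨p.penultimate, hadj.symm, ?_⟩
  have h1 : T.dist o p.penultimate ≤ p.dropLast.length := SimpleGraph.dist_le _
  have h2 : p.dropLast.length + 1 = p.length := SimpleGraph.Walk.length_dropLast_add_one hnil
  have h3 : T.dist o x ≤ T.dist o p.penultimate + T.dist p.penultimate x :=
    hconn.dist_triangle
  rw [SimpleGraph.dist_eq_one_iff_adj.mpr hadj] at h3
  omega

lemma sum_radial_of_ne {d : ℕ} {V : Type*} [DecidableEq V] {T : SimpleGraph V}
    [∀ v, Fintype (T.neighborSet v)]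
    (hconn : T.Connected) (hacyc : T.IsAcyclic) (hreg : ∀ v, T.degree v = d + 1)
    {o x : V} {k : ℕ} (hk : T.dist o x = k + 1) (h : ℕ → ℝ) :
    ∑ y ∈ T.neighborFinset x, h (T.dist o y) = h k + d * h (k + 2) := by
  have hx : x ≠ o := by
    rintro rfl
    simp at hk
  obtain ⟨y, hy, hdy⟩ := exists_closer_neighbor hconn hx
  have hmem : y ∈ T.neighborFinset x := by simpa using hy
  rw [← Finset.add_sum_erase _ _ hmem]
  have hyk : T.dist o y = k := by omega
  rw [hyk]
  congr 1
  rw [Finset.sum_congr rfl (g := fun _ => h (k + 2))]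
  · rw [Finset.sum_const, Finset.card_erase_of_mem hmem, SimpleGraph.card_neighborFinset_eq_degree,
      hreg x]
    simp
  · intro z hz
    rw [Finset.mem_erase, SimpleGraph.mem_neighborFinset] at hz
    have htree : T.IsTree := ⟨hconn, hacyc⟩
    rcases htree.dist_eq_dist_add_one_of_adj o hz.2 with h1 | h1
    · exact absurd (closer_neighbor_unique hconn hacyc hz.2 hy h1 hdy) hz.1
    · rw [h1, hk]

lemma sum_radial_root {d : ℕ} {V : Type*} {T : SimpleGraph V}
    [∀ v, Fintype (T.neighborSet v)] (hreg : ∀ v, T.degree v = d + 1) (o : V) (h : ℕ → ℝ) :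
    ∑ y ∈ T.neighborFinset o, h (T.dist o y) = (d + 1) * h 1 := by
  rw [Finset.sum_congr rfl (g := fun _ => h 1)]
  · rw [Finset.sum_const, SimpleGraph.card_neighborFinset_eq_degree, hreg o]
    simp
  · intro z hz
    rw [SimpleGraph.mem_neighborFinset] at hz
    rw [SimpleGraph.dist_eq_one_iff_adj.mpr hz]

/-- The value of `2 d^{n/2} P_n(T_d/2) δ₀` on the sphere of radius `k`, for `n ≥ 1`. At `n = 0`
the true value at the centre is `2`, not `1`. -/
noncomputable def chebCoeff (d n k : ℕ) : ℝ :=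
  if k = n then 1 else if k < n ∧ Even (n + k) then 1 - d else 0

/-- The Chebyshev recursion evaluated at a vertex. -/
lemma chebyshev_apply_add_two (d : ℕ) {V : Type*} (T : SimpleGraph V)
    [∀ v, Fintype (T.neighborSet v)] (f : V → ℝ) (n : ℕ) (x : V) :
    aeval ((2 : ℝ)⁻¹ • Td d T) (Chebyshev.T ℝ ((n + 2 : ℕ) : ℤ)) f x
      = (Real.sqrt d)⁻¹ * ∑ y ∈ T.neighborFinset x,
          aeval ((2 : ℝ)⁻¹ • Td d T) (Chebyshev.T ℝ ((n + 1 : ℕ) : ℤ)) f y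
        - aeval ((2 : ℝ)⁻¹ • Td d T) (Chebyshev.T ℝ (n : ℤ)) f x := by
  have h2 : aeval ((2 : ℝ)⁻¹ • Td d T) (2 * X : ℝ[X]) = Td d T := by
    have : (2 * X : ℝ[X]) = (2 : ℝ) • X := by
      rw [smul_eq_C_mul, map_ofNat]
    rw [this, map_smul, aeval_X, smul_smul]
    norm_num
  push_cast
  rw [Chebyshev.T_add_two, map_sub, map_mul, h2]
  rfl

lemma chebyshev_delta_eq {d : ℕ} (hd : 2 ≤ d) {V : Type*} [DecidableEq V] {T : SimpleGraph V}
    [∀ v, Fintype (T.neighborSet v)]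
    (hconn : T.Connected) (hacyc : T.IsAcyclic) (hreg : ∀ v, T.degree v = d + 1)
    (o : V) (n : ℕ) : ∀ x : V,
    aeval ((2 : ℝ)⁻¹ • Td d T) (Chebyshev.T ℝ ((n + 1 : ℕ) : ℤ))
        (fun y => if y = o then (1 : ℝ) else 0) x
      = (2 * Real.sqrt d ^ (n + 1))⁻¹ * chebCoeff d (n + 1) (T.dist o x) := by
  have hd0 : (0 : ℝ) < d := by exact_mod_cast (by omega : 0 < d)
  have hs : Real.sqrt d ≠ 0 := (Real.sqrt_pos.mpr hd0).ne'
  have hss : Real.sqrt d ^ 2 = d := Real.sq_sqrt hd0.le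
  induction n using Nat.strong_induction_on with
  | _ n ih =>
    intro x
    match n, ih with
    | 0, _ =>
      have hsum : aeval ((2 : ℝ)⁻¹ • Td d T) (Chebyshev.T ℝ ((0 + 1 : ℕ) : ℤ))
          (fun y => if y = o then (1 : ℝ) else 0) x
          = (2 : ℝ)⁻¹ * ((Real.sqrt d)⁻¹ *
              ∑ y ∈ T.neighborFinset x, if y = o then (1 : ℝ) else 0) := by
        simp only [zero_add, Nat.cast_one, Chebyshev.T_one, aeval_X]
        rfl
      rw [hsum, Finset.sum_ite_eq']
      have hiff : o ∈ T.neighborFinset x ↔ T.dist o x = 1 := by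
        rw [SimpleGraph.mem_neighborFinset, SimpleGraph.dist_eq_one_iff_adj, SimpleGraph.adj_comm]
      simp only [hiff, chebCoeff, zero_add, pow_one, mul_inv]
      rcases eq_or_ne (T.dist o x) 1 with h | h
      · simp [h]
      · have h' : ¬ (T.dist o x < 1 ∧ Even (1 + T.dist o x)) := by
          rintro ⟨h1, h2⟩
          rw [Nat.lt_one_iff.mp h1] at h2
          exact absurd h2 (by decide)
        rw [if_neg h, if_neg h, if_neg h']
        simp
    | 1, ih =>
      rw [chebyshev_apply_add_two]
      simp only [ih 0 (by omega), ← Finset.mul_sum]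
      have h0 : aeval ((2 : ℝ)⁻¹ • Td d T) (Chebyshev.T ℝ ((0 : ℕ) : ℤ))
          (fun y => if y = o then (1 : ℝ) else 0) x = if T.dist o x = 0 then 1 else 0 := by
        simp [hconn.dist_eq_zero_iff, eq_comm]
      rw [h0]
      rcases hk : T.dist o x with _ | k
      · have hxo : o = x := hconn.dist_eq_zero_iff.mp hk
        subst hxo
        rw [sum_radial_root hreg]
        have e1 : chebCoeff d (0 + 1) 1 = 1 := by simp [chebCoeff]
        have e2 : chebCoeff d (1 + 1) 0 = 1 - d := by simp [chebCoeff]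
        rw [e1, e2]
        simp only [if_true]
        generalize Real.sqrt d = s at hs hss ⊢
        rw [← hss]
        field_simp
        ring
      · rw [sum_radial_of_ne hconn hacyc hreg hk]
        have e : chebCoeff d (0 + 1) k + d * chebCoeff d (0 + 1) (k + 2)
            = chebCoeff d (1 + 1) (k + 1) := by
          rcases k with _ | _ | k <;> simp [chebCoeff] <;> grind
        rw [e]
        rw [if_neg (by omega), zero_add, pow_one]
        generalize Real.sqrt d = s at hs ⊢
        field_simp
        ring
    | m + 2, ih =>
      rw [chebyshev_apply_add_two]
      simp only [ih (m + 1) (by omega), ih m (by omega), ← Finset.mul_sum]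
      -- With `g_n = chebCoeff d n |·|` and `A` the unnormalized adjacency operator, clearing powers
      -- of `√d` turns the recursion into `A g_{m+2} = d g_{m+1} + g_{m+3}`.
      suffices h : ∑ y ∈ T.neighborFinset x, chebCoeff d (m + 1 + 1) (T.dist o y)
          = d * chebCoeff d (m + 1) (T.dist o x) + chebCoeff d (m + 2 + 1) (T.dist o x) by
        rw [h]
        generalize Real.sqrt d = s at hs hss ⊢
        rw [← hss]
        field_simp
        ring
      rcases hk : T.dist o x with _ | k
      · have hxo : o = x := hconn.dist_eq_zero_iff.mp hk
        subst hxo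
        rw [sum_radial_root hreg]
        simp only [chebCoeff]
        grind
      · rw [sum_radial_of_ne hconn hacyc hreg hk]
        simp only [chebCoeff]
        grind

/-- **Lemma 1, corollary bound** (Brooks–Lindenstrauss). On the `(d+1)`-regular tree, for `n` a
positive even integer, `|P_n(T_d/2) δ₀(x)| ≤ ((d-1)/2) d^{-n/2}` for every vertex `x`, where
`P_n` is the Chebyshev polynomial of the first kind and `δ₀` the delta function at the base
vertex `o`. -/
theorem chebyshev_matrix_coefficients_tree_bound
    (d : ℕ) (hd : 2 ≤ d) {V : Type*} [Infinite V] [DecidableEq V] (T : SimpleGraph V)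
    [∀ v, Fintype (T.neighborSet v)]
    (hconn : T.Connected) (hacyc : T.IsAcyclic) (hreg : ∀ v, T.degree v = d + 1)
    (o : V) (n : ℕ) (hn : 0 < n) (hev : Even n) (x : V) :
    |aeval ((2 : ℝ)⁻¹ • Td d T) (Chebyshev.T ℝ (n : ℤ))
        (fun y => if y = o then (1 : ℝ) else 0) x|
      ≤ (((d : ℝ) - 1) / 2) * ((d : ℝ) ^ (n / 2))⁻¹ := by
  obtain ⟨m, rfl⟩ : ∃ m, n = m + 1 := ⟨n - 1, by omega⟩
  rw [chebyshev_delta_eq hd hconn hacyc hreg]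
  have hd2 : (2 : ℝ) ≤ d := by exact_mod_cast hd
  have hpow : Real.sqrt d ^ (m + 1) = (d : ℝ) ^ ((m + 1) / 2) := by
    conv_lhs => rw [← Nat.two_mul_div_two_of_even hev, pow_mul, Real.sq_sqrt (by linarith)]
  have hc : |chebCoeff d (m + 1) (T.dist o x)| ≤ (d : ℝ) - 1 := by
    unfold chebCoeff
    split_ifs
    · rw [abs_one]
      linarith
    · rw [abs_sub_comm, abs_of_nonneg (by linarith)]
    · rw [abs_zero]
      linarith
  have hpos : (0 : ℝ) < (2 * (d : ℝ) ^ ((m + 1) / 2))⁻¹ := by positivity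
  rw [hpow, abs_mul, abs_of_pos hpos]
  calc _ ≤ (2 * (d : ℝ) ^ ((m + 1) / 2))⁻¹ * ((d : ℝ) - 1) := by gcongr
    _ = _ := by rw [mul_inv]; ring
end

section
/- For every integer d ≥ 2 and every positive even integer n, the following identity holds in ℝ[X]: P_n(X/2) = ((1-d)/(2 d^{n/2}))·Σ_{j=0}^{n/2-1} d^j·p_{2j}(X) + (1/2)·p_n(X), where P_n is the degree-n Chebyshev polynomial of the first kind and the polynomials p_k are defined by p_0 = 1, p_1 = X, p_2 = X² - (d+1)/d, and p_{k+1} = X·p_k - p_{k-1} for k ≥ 2. -/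
/-!
Put `c_k = 2 T_k(X/2)`, so that `c_{k+2} = X c_{k+1} - c_k`, and let `p_k = geron d k`. For `k ≥ 1`
one has `p_{k+2} - p_k = c_{k+2} - d⁻¹ c_k` (`geron_sub_eq`), since both sides obey the same
three-term recurrence and agree for `k = 1, 2`. Along even indices this reads
`c_{2m+2} - p_{2m+2} = d⁻¹ (c_{2m} - p_{2m}) + (d⁻¹ - 1) p_{2m}`, a first-order recursion whose
solution, started from `c_2 - p_2 = (1 - d)/d`, is the asserted geometric sum (`dilatedCheb_even`).
-/

open Polynomial Finset

/-- The Chebyshev polynomial rescaled to `2 T_k(X/2)`; it is monic for `k ≥ 1` and satisfies the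
same three-term recurrence as `geron`. -/
noncomputable def dilatedCheb (k : ℕ) : Polynomial ℝ :=
  2 * (Chebyshev.T ℝ (k : ℤ)).comp (C (2⁻¹ : ℝ) * X)

lemma two_mul_C_half : (2 : Polynomial ℝ) * C (2⁻¹ : ℝ) = 1 := by
  rw [← C_ofNat, ← C_mul]
  norm_num

lemma dilatedCheb_zero : dilatedCheb 0 = 2 := by
  simp [dilatedCheb]

lemma dilatedCheb_one : dilatedCheb 1 = X := by
  simp [dilatedCheb, ← mul_assoc, two_mul_C_half]

lemma dilatedCheb_add_two (k : ℕ) :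
    dilatedCheb (k + 2) = X * dilatedCheb (k + 1) - dilatedCheb k := by
  unfold dilatedCheb
  push_cast
  rw [Chebyshev.T_add_two]
  simp only [sub_comp, mul_comp, X_comp, ofNat_comp]
  linear_combination
    2 * X * (Chebyshev.T ℝ ((k : ℤ) + 1)).comp (C (2⁻¹ : ℝ) * X) * two_mul_C_half

/-- Comparison of the two families. The index shift by one is essential: the analogous identity
for `geron d 2 - geron d 0` fails. Both sides satisfy the recurrence `u (k+2) = X * u (k+1) - u k`,
so the first two cases suffice. -/
lemma geron_sub_eq (d : ℕ) (hd : (d : ℝ) ≠ 0) (k : ℕ) :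
    geron d (k + 3) - geron d (k + 1) =
      dilatedCheb (k + 3) - C ((d : ℝ)⁻¹) * dilatedCheb (k + 1) := by
  have hc : C (((d : ℝ) + 1) / d) = 1 + C ((d : ℝ)⁻¹) := by
    rw [add_div, div_self hd, one_div, C_add, C_1]
  induction k using Nat.twoStepInduction with
  | zero =>
    simp only [geron, dilatedCheb_add_two, dilatedCheb_one, dilatedCheb_zero, hc, zero_add]
    ring
  | one =>
    simp only [geron, dilatedCheb_add_two, dilatedCheb_one, dilatedCheb_zero, hc, Nat.reduceAdd]
    ring
  | more k h1 h2 =>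
    have e5 : geron d (k + 2 + 3) = X * geron d (k + 4) - geron d (k + 3) := geron.eq_4 d (k + 2)
    have e3 : geron d (k + 2 + 1) = X * geron d (k + 2) - geron d (k + 1) := geron.eq_4 d k
    have c5 : dilatedCheb (k + 2 + 3) = X * dilatedCheb (k + 4) - dilatedCheb (k + 3) :=
      dilatedCheb_add_two (k + 3)
    have c3 : dilatedCheb (k + 2 + 1) = X * dilatedCheb (k + 2) - dilatedCheb (k + 1) :=
      dilatedCheb_add_two (k + 1)
    linear_combination X * h2 - h1 + e5 - e3 - c5 + C ((d : ℝ)⁻¹) * c3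

lemma dilatedCheb_even (d : ℕ) (hd : (d : ℝ) ≠ 0) (m : ℕ) :
    dilatedCheb (2 * (m + 1)) =
      C ((1 - (d : ℝ)) / (d : ℝ) ^ (m + 1)) *
          ∑ j ∈ Finset.range (m + 1), C ((d : ℝ) ^ j) * geron d (2 * j)
        + geron d (2 * (m + 1)) := by
  induction m with
  | zero =>
    have h2 : dilatedCheb 2 = X * X - 2 := by
      rw [dilatedCheb_add_two 0, dilatedCheb_one, dilatedCheb_zero]
    have hc : C ((1 - (d : ℝ)) / d) - C (((d : ℝ) + 1) / d) = -2 := by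
      rw [← C_sub, ← C_ofNat, ← C_neg]
      congr 1
      field_simp
      ring
    simp only [zero_add, mul_one, pow_one, Finset.sum_range_one, pow_zero, C_1, geron, h2]
    linear_combination -hc
  | succ m ih =>
    have hk : geron d (2 * (m + 1 + 1)) - geron d (2 * (m + 1)) =
        dilatedCheb (2 * (m + 1 + 1)) - C ((d : ℝ)⁻¹) * dilatedCheb (2 * (m + 1)) :=
      geron_sub_eq d hd (2 * m + 1)
    have ha : C ((1 - (d : ℝ)) / (d : ℝ) ^ (m + 1 + 1)) =
        C ((d : ℝ)⁻¹) * C ((1 - (d : ℝ)) / (d : ℝ) ^ (m + 1)) := by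
      rw [← C_mul]
      congr 1
      field_simp
      ring
    have hb : C ((d : ℝ)⁻¹) * C ((1 - (d : ℝ)) / (d : ℝ) ^ (m + 1)) * C ((d : ℝ) ^ (m + 1)) =
        C ((d : ℝ)⁻¹) - 1 := by
      rw [← C_mul, ← C_mul, ← C_1, ← C_sub]
      congr 1
      field_simp
    rw [Finset.sum_range_succ, ha]
    linear_combination C ((d : ℝ)⁻¹) * ih - hk - geron d (2 * (m + 1)) * hb

/-- The expansion of the Chebyshev polynomial `P_n(X/2)` in terms of the sphere polynomials:
`P_n(X/2) = ((1-d)/(2 d^{n/2})) ∑_{j=0}^{n/2-1} d^j p_{2j}(X) + (1/2) p_n(X)` in `ℝ[X]`,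
for every even `n > 0`. -/
theorem chebyshev_eq_sphere_polynomial_sum
    (d : ℕ) (hd : 2 ≤ d) (n : ℕ) (hn : 0 < n) (hev : Even n) :
    (Chebyshev.T ℝ (n : ℤ)).comp (C (2⁻¹ : ℝ) * X) =
      C ((1 - (d : ℝ)) / (2 * (d : ℝ) ^ (n / 2))) *
          ∑ j ∈ Finset.range (n / 2), C ((d : ℝ) ^ j) * geron d (2 * j)
        + C (1 / 2 : ℝ) * geron d n := by
  obtain ⟨m, rfl⟩ : ∃ m, n = 2 * (m + 1) := by
    obtain ⟨r, rfl⟩ := hev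
    exact ⟨r - 1, by omega⟩
  have hd0 : (d : ℝ) ≠ 0 := by
    have : d ≠ 0 := by omega
    exact_mod_cast this
  have h := dilatedCheb_even d hd0 m
  rw [dilatedCheb] at h
  have hdiv : 2 * (m + 1) / 2 = m + 1 := by omega
  have hC : C ((1 - (d : ℝ)) / (2 * (d : ℝ) ^ (m + 1))) =
      C (2⁻¹ : ℝ) * C ((1 - (d : ℝ)) / (d : ℝ) ^ (m + 1)) := by
    rw [← C_mul]
    congr 1
    field_simp
  rw [hdiv, hC, one_div]
  linear_combination C (2⁻¹ : ℝ) * h -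
    (Chebyshev.T ℝ ((2 * (m + 1) : ℕ) : ℤ)).comp (C (2⁻¹ : ℝ) * X) * two_mul_C_half
end

section
/- Let θ₀ ∈ [0, π], let ε ∈ (0, 1), and let R be a positive integer with R ≥ 32/ε. Then there exists a positive even integer r' with (1/16)·R·ε ≤ r' ≤ 2R such that the distance from r'·θ₀ to the nearest integer multiple of 2π is at most π·ε/8. -/
/-!
Write `r' = 2 s` and `ξ = θ₀ / π`; then `r' θ₀ - 2 π k = 2 π (s ξ - k)`, so it suffices to find
`s` with `R ε / 32 ≤ s ≤ R` and `s ξ` within `ε / 16` of an integer. Dirichlet's theorem gives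
`0 < q ≤ R` with `q ξ` within `1 / (R + 1)` of an integer. Put `x = R ε / 32 ≥ 1`. If `q` is
smaller than `x`, it is replaced by its first multiple `m q ≥ x`: then `m q < x + q < 2 x ≤ R`
and `m < x / q + 1 ≤ 2 x`, so the error grows to at most `2 x / (R + 1) ≤ ε / 16`.
-/

open Real

/-- The Dirichlet approximation step of Lemma 2 (Brooks–Lindenstrauss): for `θ₀ ∈ [0,π]`,
`ε ∈ (0,1)` and an integer `R ≥ 32/ε`, there is a positive even integer `r'` with
`Rε/16 ≤ r' ≤ 2R` such that `r' θ₀` is within `πε/8` of an integer multiple of `2π`. -/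
theorem dirichlet_step (θ₀ : ℝ) (hθ₀ : θ₀ ∈ Set.Icc (0 : ℝ) π)
    (ε : ℝ) (hε : ε ∈ Set.Ioo (0 : ℝ) 1) (R : ℕ) (hR : 0 < R) (hRε : 32 / ε ≤ (R : ℝ)) :
    ∃ r' : ℕ, Even r' ∧ 0 < r' ∧ (R : ℝ) * ε / 16 ≤ (r' : ℝ) ∧ r' ≤ 2 * R ∧
      ∃ k : ℤ, |(r' : ℝ) * θ₀ - 2 * π * k| ≤ π * ε / 8 := by
  obtain ⟨hε0, hε1⟩ := hε
  have hR0 : (0 : ℝ) < R := by exact_mod_cast hR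
  obtain ⟨x, hx⟩ : ∃ x : ℝ, x = R * ε / 32 := ⟨_, rfl⟩
  have hx1 : 1 ≤ x := by
    rw [div_le_iff₀ hε0] at hRε
    linarith
  have hxR : 2 * x ≤ R := by nlinarith
  obtain ⟨j, q, hq0, hqR, hq⟩ := Real.exists_int_int_abs_mul_sub_le (θ₀ / π) hR
  lift q to ℕ using hq0.le
  have hq1 : (1 : ℝ) ≤ q := by exact_mod_cast hq0
  have hqR' : (q : ℝ) ≤ R := by exact_mod_cast hqR
  rw [Int.cast_natCast] at hq
  obtain ⟨m, hmx, hmR, hm2⟩ : ∃ m : ℕ, x ≤ m * q ∧ (m * q : ℝ) ≤ R ∧ (m : ℝ) ≤ 2 * x := by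
    rcases le_or_gt x q with h | h
    · exact ⟨1, by simpa using h, by simpa using hqR', by push_cast; linarith⟩
    · have h1 : x / q ≤ ⌈x / q⌉₊ := Nat.le_ceil _
      have h2 : (⌈x / q⌉₊ : ℝ) < x / q + 1 := Nat.ceil_lt_add_one (by positivity)
      have h3 : x / q * q = x := div_mul_cancel₀ _ (by positivity)
      have h4 : x / q ≤ x := div_le_self (by linarith) hq1
      exact ⟨⌈x / q⌉₊, by nlinarith, by nlinarith, by linarith⟩
  have herr : (m : ℝ) * |q * (θ₀ / π) - j| ≤ ε / 16 := by
    calc (m : ℝ) * |q * (θ₀ / π) - j| ≤ 2 * x * (1 / (R + 1)) := by gcongr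
      _ ≤ ε / 16 := by
        rw [mul_one_div, div_le_iff₀ (by positivity)]
        linarith
  have hmq : 0 < m * q := by
    have : (0 : ℝ) < m * q := by linarith
    exact_mod_cast this
  refine ⟨2 * (m * q), even_two_mul _, by lia, by push_cast; linarith, ?_, m * j, ?_⟩
  · have : m * q ≤ R := by exact_mod_cast hmR
    lia
  · have key : ((2 * (m * q) : ℕ) : ℝ) * θ₀ - 2 * π * ((m * j : ℤ) : ℝ)
        = 2 * π * (m * (q * (θ₀ / π) - j)) := by
      push_cast
      field_simp
    rw [key, abs_mul, abs_mul (m : ℝ), Nat.abs_cast, abs_of_pos (by positivity)]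
    nlinarith [Real.pi_pos]
end

section
/- Let M ≥ 4 be an integer and let t be a real number with |t| ≤ π/(8M). Then 1 + Σ_{j=1}^{2M} ((2M - j)/M)·cos(j t) > M + 2. -/
open Real Finset

/-!
Every coefficient `(2M - j)/M` is nonnegative, so `cos x ≥ 1 - x²/2` may be applied termwise. The
resulting polynomial sum is explicit: the constant parts give `2M` (the value at `t = 0`), and
the quadratic parts lose `t² M (4M² - 1) / 6`, which is at most `(2/3) t² M³`. For `|t| ≤ π/(8M)`
and `π < 4` this loss is at most `M/6`, and `2M - M/6 > M + 2` once `M ≥ 4`.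
-/

lemma sum_linear_mul_one_sub_sq (c m t : ℝ) (n : ℕ) :
    ∑ j ∈ Finset.Icc 1 n, ((c - (j : ℝ)) / m) * (1 - ((j : ℝ) * t) ^ 2 / 2) =
      (c * n - n * (n + 1) / 2
        - t ^ 2 / 2 * (c * (n * (n + 1) * (2 * n + 1) / 6) - n ^ 2 * (n + 1) ^ 2 / 4)) / m := by
  induction n with
  | zero => simp
  | succ k ih =>
    rw [Finset.sum_Icc_succ_top (by omega), ih]
    push_cast
    ring

/-- The Fejér kernel estimate of Lemma 2 (Brooks–Lindenstrauss): for an integer `M ≥ 4` and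
`|t| ≤ π/(8M)`, the Fejér kernel of order `2M` satisfies
`F_{2M}(t) = 1 + ∑_{j=1}^{2M} ((2M-j)/M) cos(jt) > M + 2`. -/
theorem fejer_kernel_large_near_zero (M : ℕ) (hM : 4 ≤ M) (t : ℝ) (ht : |t| ≤ π / (8 * M)) :
    (M : ℝ) + 2 <
      1 + ∑ j ∈ Finset.Icc 1 (2 * M), ((2 * (M : ℝ) - (j : ℝ)) / (M : ℝ)) * Real.cos (j * t) := by
  have hM4 : (4 : ℝ) ≤ M := by exact_mod_cast hM
  have hM0 : (0 : ℝ) < M := by linarith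
  have hle : ∑ j ∈ Finset.Icc 1 (2 * M),
        ((2 * (M : ℝ) - (j : ℝ)) / (M : ℝ)) * (1 - ((j : ℝ) * t) ^ 2 / 2) ≤
      ∑ j ∈ Finset.Icc 1 (2 * M), ((2 * (M : ℝ) - (j : ℝ)) / (M : ℝ)) * Real.cos (j * t) := by
    refine Finset.sum_le_sum fun j hj => ?_
    have hj' : (j : ℝ) ≤ 2 * M := by exact_mod_cast (Finset.mem_Icc.mp hj).2
    exact mul_le_mul_of_nonneg_left (Real.one_sub_sq_div_two_le_cos)
      (div_nonneg (by linarith) hM0.le)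
  rw [sum_linear_mul_one_sub_sq] at hle
  have hval : (2 * (M : ℝ) * ((2 * M : ℕ) : ℝ) - ((2 * M : ℕ) : ℝ) * (((2 * M : ℕ) : ℝ) + 1) / 2
        - t ^ 2 / 2 * (2 * (M : ℝ) * (((2 * M : ℕ) : ℝ) * (((2 * M : ℕ) : ℝ) + 1)
          * (2 * ((2 * M : ℕ) : ℝ) + 1) / 6)
          - ((2 * M : ℕ) : ℝ) ^ 2 * (((2 * M : ℕ) : ℝ) + 1) ^ 2 / 4)) / M
      = 2 * M - 1 - t ^ 2 * (M * (4 * M ^ 2 - 1) / 6) := by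
    push_cast
    field_simp
    ring
  rw [hval] at hle
  have htM : |t * M| ≤ 1 / 2 := by
    rw [abs_mul, abs_of_pos hM0]
    calc |t| * M ≤ π / (8 * M) * M := by gcongr
      _ = π / 8 := by field_simp
      _ ≤ 1 / 2 := by linarith [Real.pi_le_four]
  have hsq : (t * M) ^ 2 ≤ 1 / 4 := by
    nlinarith [sq_abs (t * M), abs_nonneg (t * M)]
  have hloss : t ^ 2 * (M * (4 * (M : ℝ) ^ 2 - 1) / 6) ≤ M / 6 := by
    nlinarith [mul_le_mul_of_nonneg_left hsq hM0.le, mul_nonneg (sq_nonneg t) hM0.le]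
  linarith
end

section
/- Let d ≥ 2 be an integer and define the Plancherel density ρ(θ) = (2(d+1)/π)·sin²θ / ((d+1)²/d - 4cos²θ) for θ ∈ [0, π]. Then ∫₀^π ρ(θ) dθ = 1, and for every integer n ≥ 1, ∫₀^π cos(2nθ)·ρ(θ) dθ = (1-d)/(2 d^n). -/
open Real MeasureTheory intervalIntegral

/-!
The denominator `(d+1)²/d - 4 cos² θ` equals `d + 1/d - 2 cos 2θ`, the denominator of a Poisson
kernel. Writing `K n = ∫₀^π cos(2nθ) / (d + 1/d - 2 cos 2θ) dθ`, the product formula for cosines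
gives `(d + 1/d) K (n+1) = K (n+2) + K n` and `(d + 1/d) K 0 = 2 K 1 + π`. The recurrence says that
`J n = K (n+1) - K n / d` satisfies `J (n+1) = d * J n`; since `K` is bounded and `d > 1`, this
forces `J = 0` (`poissonCoeff_succ`), so `K n = K 0 / dⁿ` with `K 0 * (d - 1/d) = π`.
As `2 sin² θ = 1 - cos 2θ`, the Fourier coefficients of the Plancherel density are combinations of
consecutive values of `K`.
-/

/-- The `2n`-th cosine coefficient on `[0, π]` of `1 / ((d+1)²/d - 4 cos² θ)`, which is a
Poisson kernel in the angle `2θ` up to a constant factor. -/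
noncomputable def poissonCoeff (d : ℝ) (n : ℕ) : ℝ :=
  ∫ θ in (0 : ℝ)..π, cos (2 * n * θ) / ((d + 1) ^ 2 / d - 4 * cos θ ^ 2)

lemma denom_lower_bound {d : ℝ} (hd : 1 < d) (θ : ℝ) :
    (d - 1) ^ 2 / d ≤ (d + 1) ^ 2 / d - 4 * cos θ ^ 2 := by
  have h : (d + 1) ^ 2 / d = (d - 1) ^ 2 / d + 4 := by
    field_simp
    ring
  nlinarith [cos_sq_le_one θ]

lemma denom_pos {d : ℝ} (hd : 1 < d) (θ : ℝ) :
    0 < (d + 1) ^ 2 / d - 4 * cos θ ^ 2 := by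
  have h : 0 < (d - 1) ^ 2 / d := by
    have : 0 < d - 1 := by linarith
    positivity
  exact h.trans_le (denom_lower_bound hd θ)

lemma continuous_poissonIntegrand {d : ℝ} (hd : 1 < d) (n : ℕ) :
    Continuous fun θ : ℝ => cos (2 * n * θ) / ((d + 1) ^ 2 / d - 4 * cos θ ^ 2) :=
  Continuous.div (by fun_prop) (by fun_prop) fun θ => (denom_pos hd θ).ne'

lemma abs_poissonCoeff_le {d : ℝ} (hd : 1 < d) (n : ℕ) :
    |poissonCoeff d n| ≤ d / (d - 1) ^ 2 * π := by
  have h : ∀ θ ∈ Set.uIoc (0 : ℝ) π,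
      ‖cos (2 * n * θ) / ((d + 1) ^ 2 / d - 4 * cos θ ^ 2)‖ ≤ d / (d - 1) ^ 2 := by
    intro θ _
    have h1 : 0 < d - 1 := by linarith
    rw [norm_eq_abs, abs_div, abs_of_pos (denom_pos hd θ), ← one_div_div ((d - 1) ^ 2) d]
    exact div_le_div₀ zero_le_one (abs_cos_le_one _) (by positivity) (denom_lower_bound hd θ)
  simpa [poissonCoeff, abs_of_pos pi_pos] using norm_integral_le_of_norm_le_const h

lemma integral_cos_two_mul_succ (n : ℕ) :
    ∫ θ in (0 : ℝ)..π, cos (2 * (n + 1 : ℕ) * θ) = 0 := by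
  have h0 : (2 * ((n + 1 : ℕ) : ℝ)) ≠ 0 := by positivity
  have h1 : sin (2 * ((n + 1 : ℕ) : ℝ) * π) = 0 := by
    simpa using sin_nat_mul_pi (2 * (n + 1))
  rw [integral_comp_mul_left (fun x => cos x) h0, integral_cos, h1]
  simp

lemma cos_add_cos_shift (n : ℕ) (θ : ℝ) :
    cos (2 * (n + 2 : ℕ) * θ) + cos (2 * n * θ)
      = 2 * cos (2 * (n + 1 : ℕ) * θ) * (2 * cos θ ^ 2 - 1) := by
  have h1 : 2 * ((n + 2 : ℕ) : ℝ) * θ = 2 * (n + 1 : ℕ) * θ + 2 * θ := by push_cast; ring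
  have h2 : 2 * (n : ℝ) * θ = 2 * (n + 1 : ℕ) * θ - 2 * θ := by push_cast; ring
  rw [h1, h2, cos_add, cos_sub, ← cos_two_mul]
  ring

lemma poissonCoeff_recurrence {d : ℝ} (hd : 1 < d) (n : ℕ) :
    (d + 1 / d) * poissonCoeff d (n + 1) = poissonCoeff d (n + 2) + poissonCoeff d n := by
  have hi := fun m => (continuous_poissonIntegrand hd m).intervalIntegrable (μ := volume) 0 π
  have key : (d + 1 / d) * poissonCoeff d (n + 1) - (poissonCoeff d (n + 2) + poissonCoeff d n)
      = ∫ θ in (0 : ℝ)..π, cos (2 * (n + 1 : ℕ) * θ) := by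
    unfold poissonCoeff
    rw [← intervalIntegral.integral_const_mul, ← intervalIntegral.integral_add (hi _) (hi _),
      ← intervalIntegral.integral_sub ((hi _).const_mul _) ((hi _).add (hi _))]
    refine integral_congr fun θ _ => ?_
    have hD := (denom_pos hd θ).ne'
    have hE : d + 1 / d = (d + 1) ^ 2 / d - 4 * cos θ ^ 2 + 2 * (2 * cos θ ^ 2 - 1) := by
      field_simp
      ring
    rw [← add_div, cos_add_cos_shift, hE]
    generalize (d + 1) ^ 2 / d - 4 * cos θ ^ 2 = D at hD
    field_simp
    ring
  rw [integral_cos_two_mul_succ] at key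
  linarith

lemma poissonCoeff_recurrence_zero {d : ℝ} (hd : 1 < d) :
    (d + 1 / d) * poissonCoeff d 0 = 2 * poissonCoeff d 1 + π := by
  have hi := fun m => (continuous_poissonIntegrand hd m).intervalIntegrable (μ := volume) 0 π
  have key : (d + 1 / d) * poissonCoeff d 0 - 2 * poissonCoeff d 1
      = ∫ θ in (0 : ℝ)..π, (1 : ℝ) := by
    unfold poissonCoeff
    rw [← intervalIntegral.integral_const_mul, ← intervalIntegral.integral_const_mul,
      ← intervalIntegral.integral_sub ((hi _).const_mul _) ((hi _).const_mul _)]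
    refine integral_congr fun θ _ => ?_
    have hD := (denom_pos hd θ).ne'
    have hE : d + 1 / d = (d + 1) ^ 2 / d - 4 * cos θ ^ 2 + 2 * (2 * cos θ ^ 2 - 1) := by
      field_simp
      ring
    have hc : cos (2 * ((1 : ℕ) : ℝ) * θ) = 2 * cos θ ^ 2 - 1 := by
      rw [← cos_two_mul]; simp
    have hc0 : cos (2 * ((0 : ℕ) : ℝ) * θ) = 1 := by simp
    rw [hc, hc0, hE]
    generalize (d + 1) ^ 2 / d - 4 * cos θ ^ 2 = D at hD
    field_simp
    ring
  simp only [intervalIntegral.integral_const, sub_zero, smul_eq_mul, mul_one] at key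
  linarith

/-- Boundedness selects the decaying solution of the two-term recurrence. -/
lemma poissonCoeff_succ {d : ℝ} (hd : 1 < d) (n : ℕ) :
    poissonCoeff d (n + 1) = poissonCoeff d n / d := by
  have hd0 : d ≠ 0 := by linarith
  set J : ℕ → ℝ := fun m => poissonCoeff d (m + 1) - poissonCoeff d m / d with hJ
  have hstep : ∀ m, J (m + 1) = d * J m := by
    intro m
    have h := poissonCoeff_recurrence hd m
    have hm : d * (poissonCoeff d m / d) = poissonCoeff d m := by field_simp
    simp only [hJ, mul_sub, hm]
    rw [show m + 1 + 1 = m + 2 from rfl]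
    linear_combination -h
  have hpow : ∀ k, J (n + k) = d ^ k * J n := by
    intro k
    induction k with
    | zero => simp
    | succ k ih => rw [← add_assoc, hstep, ih, pow_succ]; ring
  set C : ℝ := d / (d - 1) ^ 2 * π
  have hbound : ∀ m, |J m| ≤ C + C := by
    intro m
    refine (abs_sub _ _).trans (add_le_add (abs_poissonCoeff_le hd _) ?_)
    rw [abs_div, abs_of_pos (by linarith : 0 < d)]
    exact (div_le_self (abs_nonneg _) hd.le).trans (abs_poissonCoeff_le hd _)
  have hzero : J n = 0 := by
    by_contra hne
    have hpos : 0 < |J n| := abs_pos.mpr hne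
    obtain ⟨k, hk⟩ := pow_unbounded_of_one_lt ((C + C) / |J n|) hd
    have h := hbound (n + k)
    rw [hpow, abs_mul, abs_of_pos (by positivity : 0 < d ^ k)] at h
    rw [div_lt_iff₀ hpos] at hk
    linarith
  exact sub_eq_zero.mp hzero

lemma poissonCoeff_eq {d : ℝ} (hd : 1 < d) (n : ℕ) :
    poissonCoeff d n = π * d / ((d ^ 2 - 1) * d ^ n) := by
  have hd0 : d ≠ 0 := by linarith
  have hd1 : d ^ 2 - 1 ≠ 0 := by nlinarith
  induction n with
  | zero =>
    have h := poissonCoeff_recurrence_zero hd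
    rw [poissonCoeff_succ hd 0] at h
    field_simp at h ⊢
    linarith
  | succ n ih =>
    rw [poissonCoeff_succ hd, ih]
    field_simp
    ring

/-- The Plancherel measure of the `(d+1)`-regular tree, in the parametrization `λ = 2 cos θ`,
has total mass `1` and Fourier coefficients `∫₀^π cos(2nθ) dm(θ) = (1-d)/(2 dⁿ)` for `n ≥ 1`
(Figá-Talamanca–Picardello). -/
theorem plancherel_measure_fourier_coefficients (d : ℕ) (hd : 2 ≤ d) :
    (∫ θ in (0 : ℝ)..π,
        (2 * ((d : ℝ) + 1) / π) * Real.sin θ ^ 2 /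
          (((d : ℝ) + 1) ^ 2 / d - 4 * Real.cos θ ^ 2)) = 1 ∧
    ∀ n : ℕ, 1 ≤ n →
      (∫ θ in (0 : ℝ)..π,
          Real.cos (2 * n * θ) * ((2 * ((d : ℝ) + 1) / π) * Real.sin θ ^ 2 /
            (((d : ℝ) + 1) ^ 2 / d - 4 * Real.cos θ ^ 2)))
        = (1 - (d : ℝ)) / (2 * (d : ℝ) ^ n) := by
  have hd1 : (1 : ℝ) < d := by exact_mod_cast hd
  have hd0 : (d : ℝ) ≠ 0 := by linarith
  have hdp : (d : ℝ) + 1 ≠ 0 := by linarith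
  have hdm : (d : ℝ) - 1 ≠ 0 := by linarith
  have hpi := pi_ne_zero
  have hsq : (d : ℝ) ^ 2 - 1 = (d - 1) * (d + 1) := by ring
  have hi := fun m => (continuous_poissonIntegrand hd1 m).intervalIntegrable (μ := volume) 0 π
  constructor
  · have key : (∫ θ in (0 : ℝ)..π,
        (2 * ((d : ℝ) + 1) / π) * Real.sin θ ^ 2 /
          (((d : ℝ) + 1) ^ 2 / d - 4 * Real.cos θ ^ 2))
        = ((d : ℝ) + 1) / π * (poissonCoeff d 0 - poissonCoeff d 1) := by
      unfold poissonCoeff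
      rw [← intervalIntegral.integral_sub (hi _) (hi _), ← intervalIntegral.integral_const_mul]
      refine integral_congr fun θ _ => ?_
      have hc : cos (2 * ((1 : ℕ) : ℝ) * θ) = 2 * cos θ ^ 2 - 1 := by
        rw [← cos_two_mul]; simp
      have hc0 : cos (2 * ((0 : ℕ) : ℝ) * θ) = 1 := by simp
      rw [hc, hc0, sin_sq]
      ring
    rw [key, poissonCoeff_eq hd1, poissonCoeff_eq hd1, hsq]
    field_simp
  · intro n hn
    obtain ⟨m, rfl⟩ : ∃ m, n = m + 1 := ⟨n - 1, by omega⟩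
    have key : (∫ θ in (0 : ℝ)..π,
        Real.cos (2 * (m + 1 : ℕ) * θ) * ((2 * ((d : ℝ) + 1) / π) * Real.sin θ ^ 2 /
          (((d : ℝ) + 1) ^ 2 / d - 4 * Real.cos θ ^ 2)))
        = ((d : ℝ) + 1) / π * (poissonCoeff d (m + 1)
            - 1 / 2 * (poissonCoeff d (m + 2) + poissonCoeff d m)) := by
      unfold poissonCoeff
      rw [← intervalIntegral.integral_add (hi _) (hi _), ← intervalIntegral.integral_const_mul,
        ← intervalIntegral.integral_sub (hi _) (((hi _).add (hi _)).const_mul _), ← intervalIntegral.integral_const_mul]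
      refine integral_congr fun θ _ => ?_
      rw [← add_div, cos_add_cos_shift, sin_sq]
      ring
    rw [key, poissonCoeff_eq hd1, poissonCoeff_eq hd1, poissonCoeff_eq hd1, hsq]
    field_simp
    ring
end

section
/- Let V be a finite-dimensional real inner product space, let ε ∈ (0, 1], and let K : V → V be a symmetric linear operator such that ⟨Kw, w⟩ ≥ -‖w‖² for all w ∈ V (i.e. K + I is positive semidefinite). Suppose v ∈ V is a unit vector with Kv = μv for some μ ≥ 1/ε, and u ∈ V satisfies ‖u‖ ≤ 1, ⟨u, v⟩ = ‖u‖², and ‖u‖² ≥ ε. Then ⟨Ku, u⟩ ≥ ε². -/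
/-!
Put `s = ‖u‖²` and split `u = s • v + w` with `w` orthogonal to `v`. As `v` is an eigenvector of the
symmetric operator `K`, the cross terms vanish and `⟪K u, u⟫ = μ s² + ⟪K w, w⟫`, while
`⟪K w, w⟫ ≥ -‖w‖² = -(s - s²)`. Since `μ s ≥ μ ε ≥ 1`, this gives `⟪K u, u⟫ ≥ s² ≥ ε²`.
-/

open RealInnerProductSpace

/-- The abstract spectral estimate behind Theorem 1 (Brooks–Lindenstrauss): if `K` is symmetric
with `K + I` positive semidefinite, `v` is a unit eigenvector of `K` with eigenvalue `μ ≥ 1/ε`,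
and `u` satisfies `‖u‖ ≤ 1`, `⟪u, v⟫ = ‖u‖²` and `‖u‖² ≥ ε`, then `⟪Ku, u⟫ ≥ ε²`. -/
theorem spectral_mass_estimate {V : Type*} [NormedAddCommGroup V] [InnerProductSpace ℝ V]
    [FiniteDimensional ℝ V] (ε : ℝ) (hε : ε ∈ Set.Ioc (0 : ℝ) 1)
    (K : V →ₗ[ℝ] V) (hsym : ∀ w w' : V, ⟪K w, w'⟫ = ⟪w, K w'⟫)
    (hpsd : ∀ w : V, -‖w‖ ^ 2 ≤ ⟪K w, w⟫)
    (v : V) (hv : ‖v‖ = 1) (μ : ℝ) (hμ : 1 / ε ≤ μ) (hKv : K v = μ • v)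
    (u : V) (hu1 : ‖u‖ ≤ 1) (huv : ⟪u, v⟫ = ‖u‖ ^ 2) (hu2 : ε ≤ ‖u‖ ^ 2) :
    ε ^ 2 ≤ ⟪K u, u⟫ := by
  obtain ⟨hε0, -⟩ := hε
  -- `w = u - ‖u‖² v` is the component of `u` orthogonal to `v`; `K + I ≥ 0` is applied to it.
  have hw := hpsd (u - (‖u‖ ^ 2) • v)
  have hvu : ⟪v, u⟫ = ‖u‖ ^ 2 := by rw [real_inner_comm, huv]
  have hKuv : ⟪K u, v⟫ = μ * ‖u‖ ^ 2 := by
    rw [hsym, hKv, real_inner_smul_right, huv]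
  have hvv : ⟪v, v⟫ = 1 := by rw [real_inner_self_eq_norm_sq, hv]; norm_num
  rw [← real_inner_self_eq_norm_sq (u - _)] at hw
  simp only [map_sub, map_smul, hKv, inner_sub_left, inner_sub_right, real_inner_smul_left,
    real_inner_smul_right, hvu, huv, hKuv, hvv, real_inner_self_eq_norm_sq u] at hw
  generalize ‖u‖ ^ 2 = s at *
  have hs : 0 < s := hε0.trans_le hu2
  have hμε : 1 ≤ μ * ε := (div_le_iff₀ hε0).1 hμ
  have hμ0 : 0 < μ := (one_div_pos.2 hε0).trans_le hμ
  have hμs : 1 ≤ μ * s := hμε.trans (mul_le_mul_of_nonneg_left hu2 hμ0.le)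
  -- The gain `μ s²` along `v` absorbs the loss `s - s²` from the orthogonal part, up to `s²`.
  have h1 : s ≤ μ * s * s := le_mul_of_one_le_left hs.le hμs
  have h2 : ε ^ 2 ≤ s ^ 2 := pow_le_pow_left₀ hε0.le hu2 2
  linarith
end

section
/- Let d ≥ 2 and N ≥ 1 be integers, and let G be a finite (d+1)-regular simple graph containing no cycle of length at most 2N (girth greater than 2N). Then for every integer 0 ≤ n ≤ N and all vertices x, y of G: S_n δ_x(y) = d^{-n/2} if the graph distance from x to y equals n, and S_n δ_x(y) = 0 otherwise. In particular, ‖S_n δ_x‖_∞ ≤ d^{-n/2} for all n ≤ N and all vertices x. -/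
/-!
In terms of the sphere indicator `σ_n(y) = 1` if `edist x y = n` and `0` otherwise, the claim is
`S_n δ_x = d^{-n/2} σ_n`. It follows by induction from the recurrence defining `geron` once the
unnormalized adjacency operator `A` is known to satisfy
`A σ_{k+1} = σ_{k+2} + d σ_k` for `k ≥ 1`, and `A σ_1 = σ_2 + (d+1) σ_0`, whenever `k + 2 ≤ N`
(`sum_neighbor_sphere`).

This identity holds because the balls of radius `N` look like balls in a tree. Two distinct paths
with the same endpoints span a subgraph that is not acyclic, hence a cycle whose edges are among
theirs; so the girth hypothesis forces paths of total length at most `2N` to coincide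
(`path_unique_of_girth`). Consequently a vertex at distance `k + 1 ≤ N` from `x` has exactly one
neighbour at distance `k` (`existsUnique_pred`), and two vertices at the same distance `k < N` are
never adjacent (`not_adj_same_level`).
-/

open Polynomial Finset ENNReal Real

/-- The edges of `p` and `q` span a subgraph; were it acyclic, `p = q`. Otherwise it contains a
cycle, whose edges are distinct and lie on `p` or `q`. -/
lemma path_unique_of_girth {V : Type*} [DecidableEq V] {G : SimpleGraph V} {M : ℕ}
    (hgirth : ∀ (v : V) (c : G.Walk v v), c.IsCycle → M < c.length)
    {u v : V} (p q : G.Walk u v) (hp : p.IsPath) (hq : q.IsPath)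
    (hlen : p.length + q.length ≤ M) : p = q := by
  set H : SimpleGraph V := SimpleGraph.fromEdgeSet {e | e ∈ p.edges ∨ e ∈ q.edges} with hH
  have hHe : ∀ e, e ∈ H.edgeSet → e ∈ p.edges ∨ e ∈ q.edges := by
    intro e he
    rw [hH, SimpleGraph.edgeSet_fromEdgeSet] at he
    exact he.1
  have hmem : ∀ e, e ∈ G.edgeSet → (e ∈ p.edges ∨ e ∈ q.edges) → e ∈ H.edgeSet := by
    intro e he h
    rw [hH, SimpleGraph.edgeSet_fromEdgeSet]
    exact ⟨h, G.not_isDiag_of_mem_edgeSet he⟩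
  have hpH : ∀ e ∈ p.edges, e ∈ H.edgeSet := fun e he =>
    hmem e (p.edges_subset_edgeSet he) (Or.inl he)
  have hqH : ∀ e ∈ q.edges, e ∈ H.edgeSet := fun e he =>
    hmem e (q.edges_subset_edgeSet he) (Or.inr he)
  have hHG : ∀ e, e ∈ H.edgeSet → e ∈ G.edgeSet := fun e he =>
    (hHe e he).elim (fun h => p.edges_subset_edgeSet h) (fun h => q.edges_subset_edgeSet h)
  have hacyc : H.IsAcyclic := by
    intro w c hc
    have hcG : ∀ e ∈ c.edges, e ∈ G.edgeSet := fun e he => hHG e (c.edges_subset_edgeSet he)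
    have h1 := hgirth w (c.transfer G hcG) (hc.transfer hcG)
    rw [SimpleGraph.Walk.length_transfer] at h1
    have h2 : c.edges.toFinset ⊆ p.edges.toFinset ∪ q.edges.toFinset := by
      intro e he
      simpa using hHe e (c.edges_subset_edgeSet (by simpa using he))
    have h3 : c.length = c.edges.toFinset.card := by
      rw [List.toFinset_card_of_nodup hc.edges_nodup, SimpleGraph.Walk.length_edges]
    have h4 := Finset.card_le_card h2
    have h5 := Finset.card_union_le p.edges.toFinset q.edges.toFinset
    have h6 := p.edges.toFinset_card_le
    have h7 := q.edges.toFinset_card_le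
    rw [SimpleGraph.Walk.length_edges] at h6 h7
    omega
  have h := (hacyc.subsingleton_path u v).elim ⟨p.transfer H hpH, hp.transfer hpH⟩
    ⟨q.transfer H hqH, hq.transfer hqH⟩
  have h' : p.transfer H hpH = q.transfer H hqH := congrArg Subtype.val h
  have hs := congrArg SimpleGraph.Walk.support h'
  rw [SimpleGraph.Walk.support_transfer, SimpleGraph.Walk.support_transfer] at hs
  exact SimpleGraph.Walk.ext_support hs

lemma isPath_of_length_eq_edist {V : Type*} {G : SimpleGraph V} {u v : V} (p : G.Walk u v)
    {k : ℕ} (hp : p.length = k) (h : G.edist u v = k) : p.IsPath := by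
  apply p.isPath_of_length_eq_dist
  rw [SimpleGraph.dist, h, hp]
  rfl

lemma edist_le_succ_of_adj {V : Type*} {G : SimpleGraph V} {x y z : V} (h : G.Adj y z) :
    G.edist x y ≤ G.edist x z + 1 := by
  have h1 := G.edist_triangle (u := x) (v := z) (w := y)
  rwa [SimpleGraph.edist_eq_one_iff_adj.mpr h.symm] at h1

lemma edist_trichotomy {V : Type*} {G : SimpleGraph V} {x y z : V} (h : G.Adj y z) {m : ℕ}
    (hz : G.edist x z = m) :
    ∃ k : ℕ, G.edist x y = k ∧ (k = m + 1 ∨ k = m ∨ k + 1 = m) := by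
  have h1 := edist_le_succ_of_adj (x := x) h
  have h2 := edist_le_succ_of_adj (x := x) h.symm
  rw [hz] at h1 h2
  have hne : G.edist x y ≠ ⊤ := by
    intro ht
    rw [ht] at h1
    exact absurd (top_le_iff.mp h1) (by exact_mod_cast ENat.natCast_ne_top (m + 1))
  obtain ⟨k, hk⟩ := ENat.ne_top_iff_exists.mp hne
  rw [← hk] at h1 h2
  refine ⟨k, hk.symm, ?_⟩
  norm_cast at h1 h2
  omega

lemma existsUnique_pred {V : Type*} [DecidableEq V] {G : SimpleGraph V} {N : ℕ}
    (hgirth : ∀ (v : V) (c : G.Walk v v), c.IsCycle → 2 * N < c.length)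
    {x y : V} {k : ℕ} (hk : k + 1 ≤ N) (hy : G.edist x y = (k + 1 : ℕ)) :
    ∃! z, G.Adj y z ∧ G.edist x z = k := by
  obtain ⟨w, hw⟩ := SimpleGraph.exists_walk_of_edist_eq_coe hy
  have hnil : ¬ w.Nil := by
    rw [← SimpleGraph.Walk.length_eq_zero_iff]
    omega
  have hadj := w.adj_penultimate hnil
  refine ⟨w.penultimate, ⟨hadj.symm, ?_⟩, ?_⟩
  · have h1 := SimpleGraph.edist_le w.dropLast
    have h2 := congrArg SimpleGraph.Walk.length (SimpleGraph.Walk.concat_dropLast hadj)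
    rw [SimpleGraph.Walk.length_concat] at h2
    have h3 : w.dropLast.length = k := by omega
    rw [h3] at h1
    obtain ⟨j, hj, h4⟩ := edist_trichotomy hadj hy
    rw [hj] at h1 ⊢
    norm_cast at h1 ⊢
    omega
  · rintro z ⟨hz, hzk⟩
    obtain ⟨q, hq⟩ := SimpleGraph.exists_walk_of_edist_eq_coe hzk
    have hl : (q.concat hz.symm).length = k + 1 := by
      rw [SimpleGraph.Walk.length_concat, hq]
    have := path_unique_of_girth hgirth (q.concat hz.symm) w
      (isPath_of_length_eq_edist _ hl hy) (isPath_of_length_eq_edist _ hw hy) (by omega)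
    rw [← this, SimpleGraph.Walk.penultimate_concat]

/-- An edge between two vertices at distance `k` from `x` would yield two paths to one of them, of
lengths `k` and `k + 1`. -/
lemma not_adj_same_level {V : Type*} [DecidableEq V] {G : SimpleGraph V} {N : ℕ}
    (hgirth : ∀ (v : V) (c : G.Walk v v), c.IsCycle → 2 * N < c.length)
    {x y z : V} {k : ℕ} (hk : k + 1 ≤ N) (hy : G.edist x y = k) (hz : G.edist x z = k) :
    ¬ G.Adj y z := by
  intro h
  obtain ⟨p, hp⟩ := SimpleGraph.exists_walk_of_edist_eq_coe hy
  obtain ⟨q, hq⟩ := SimpleGraph.exists_walk_of_edist_eq_coe hz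
  have hyq : y ∉ q.support := by
    -- Otherwise `y ≠ z` would occur strictly before the end of the geodesic `q` to `z`.
    intro hmem
    have h1 := SimpleGraph.edist_le (q.takeUntil y hmem)
    rw [hy] at h1
    norm_cast at h1
    have h2 := q.length_takeUntil_lt_length hmem h.ne
    omega
  have hqp := (isPath_of_length_eq_edist q hq hz).concat hyq h.symm
  have hl := q.length_concat h.symm
  have := path_unique_of_girth hgirth p (q.concat h.symm)
    (isPath_of_length_eq_edist p hp hy) hqp (by omega)
  have := congrArg SimpleGraph.Walk.length this
  omega

/-- The recursion `A σ_{k+1} = σ_{k+2} + c σ_k` for sphere indicators around `x`, where `c` is the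
number of neighbours leading away from `x`: all `d + 1` of them at `x` itself, and `d` elsewhere. -/
lemma sum_neighbor_sphere {d N : ℕ} {V : Type*} [Fintype V] [DecidableEq V] (G : SimpleGraph V)
    [DecidableRel G.Adj] (hreg : G.IsRegularOfDegree (d + 1))
    (hgirth : ∀ (v : V) (c : G.Walk v v), c.IsCycle → 2 * N < c.length)
    (x y : V) (k : ℕ) (hk : k + 2 ≤ N) :
    ∑ z ∈ G.neighborFinset y, (if G.edist x z = (k + 1 : ℕ) then (1 : ℝ) else 0) =
      (if G.edist x y = (k + 2 : ℕ) then (1 : ℝ) else 0) +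
        (if k = 0 then (d : ℝ) + 1 else d) * (if G.edist x y = (k : ℕ) then (1 : ℝ) else 0) := by
  -- Sums of a sphere indicator over the neighbours of a vertex one level further out.
  have hpred : ∀ j : ℕ, j + 1 ≤ N → G.edist x y = (j + 1 : ℕ) →
      ∑ z ∈ G.neighborFinset y, (if G.edist x z = (j : ℕ) then (1 : ℝ) else 0) = 1 := by
    intro j hj hy
    obtain ⟨z, ⟨hz1, hz2⟩, hz3⟩ := existsUnique_pred hgirth hj hy
    rw [Finset.sum_eq_single z]
    · rw [if_pos hz2]
    · intro b hb hbz
      rw [if_neg]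
      intro hb2
      exact hbz (hz3 b ⟨by simpa using hb, hb2⟩)
    · intro h
      exact absurd (by simpa using hz1) h
  have hcard : ∑ z ∈ G.neighborFinset y, (1 : ℝ) = d + 1 := by
    rw [Finset.sum_const, SimpleGraph.card_neighborFinset_eq_degree, hreg y]
    simp
  by_cases h2 : G.edist x y = (k + 2 : ℕ)
  · have hne : G.edist x y ≠ (k : ℕ) := by
      rw [h2]
      norm_cast
      omega
    rw [hpred (k + 1) hk h2, if_pos h2, if_neg hne]
    ring
  rw [if_neg h2]
  by_cases h0 : G.edist x y = (k : ℕ)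
  · rw [if_pos h0]
    rcases k with _ | j
    · have hxy : x = y := by
        rw [← SimpleGraph.edist_eq_zero_iff (G := G)]
        exact_mod_cast h0
      subst hxy
      have : ∑ z ∈ G.neighborFinset x, (if G.edist x z = ((0 + 1 : ℕ) : ℕ∞) then (1 : ℝ) else 0) =
          ∑ z ∈ G.neighborFinset x, (1 : ℝ) := by
        refine Finset.sum_congr rfl fun z hz => ?_
        rw [if_pos]
        simpa using hz
      rw [this, hcard]
      simp
    · -- Each neighbour of `y` lies either one level further out or one level closer to `x`.
      have hsplit : ∑ z ∈ G.neighborFinset y,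
          ((if G.edist x z = (j + 1 + 1 : ℕ) then (1 : ℝ) else 0) +
            (if G.edist x z = (j : ℕ) then (1 : ℝ) else 0)) =
          ∑ z ∈ G.neighborFinset y, (1 : ℝ) := by
        refine Finset.sum_congr rfl fun z hz => ?_
        have hz' : G.Adj y z := by simpa using hz
        obtain ⟨m, hm, hm'⟩ := edist_trichotomy hz'.symm h0
        rw [hm]
        rcases hm' with rfl | rfl | hm'
        · rw [if_pos rfl, if_neg (by norm_cast; omega)]
          ring
        · exact absurd hz' (not_adj_same_level hgirth (by omega) h0 hm)
        · obtain rfl : m = j := by omega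
          rw [if_pos rfl, if_neg (by norm_cast; omega)]
          ring
      rw [Finset.sum_add_distrib, hpred j (by omega) h0, hcard] at hsplit
      rw [if_neg (Nat.succ_ne_zero j)]
      linarith
  · rw [if_neg h0]
    have : ∑ z ∈ G.neighborFinset y, (if G.edist x z = (k + 1 : ℕ) then (1 : ℝ) else 0) = 0 := by
      refine Finset.sum_eq_zero fun z hz => ?_
      rw [if_neg]
      intro hzk
      have hz' : G.Adj y z := by simpa using hz
      obtain ⟨m, hm, hm'⟩ := edist_trichotomy hz' hzk
      rcases hm' with rfl | rfl | hm'
      · exact h2 hm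
      · exact not_adj_same_level hgirth (by omega) hm hzk hz'
      · obtain rfl : m = k := by omega
        exact h0 hm
    rw [this]
    ring

lemma Td_smul_apply (d : ℕ) {V : Type*} (G : SimpleGraph V) [∀ v, Fintype (G.neighborSet v)]
    (c : ℝ) (f : V → ℝ) (y : V) :
    Td d G (fun z => c * f z) y = (Real.sqrt d)⁻¹ * c * ∑ z ∈ G.neighborFinset y, f z := by
  change (Real.sqrt d)⁻¹ * ∑ z ∈ G.neighborFinset y, c * f z = _
  rw [← Finset.mul_sum, mul_assoc]

/-- The sphere operators applied to `δ_x`, with `d^{-n/2}` written as a natural power of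
`(√d)⁻¹`. -/
lemma sphere_operator_eq {d N : ℕ} (hd : 2 ≤ d)
    {V : Type*} [Fintype V] [DecidableEq V] (G : SimpleGraph V) [DecidableRel G.Adj]
    (hreg : G.IsRegularOfDegree (d + 1))
    (hgirth : ∀ (v : V) (c : G.Walk v v), c.IsCycle → 2 * N < c.length) (x : V) (n : ℕ)
    (hn : n ≤ N) :
    aeval (Td d G) (geron d n) (fun z => if z = x then (1 : ℝ) else 0) =
      fun y => ((Real.sqrt d)⁻¹) ^ n * (if G.edist x y = (n : ℕ) then (1 : ℝ) else 0) := by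
  have hd0 : (d : ℝ) ≠ 0 := by positivity
  have hs : (Real.sqrt d)⁻¹ * (Real.sqrt d)⁻¹ * d = 1 := by
    rw [← mul_inv, Real.mul_self_sqrt (Nat.cast_nonneg d), inv_mul_cancel₀ hd0]
  have hzero : (fun z => if z = x then (1 : ℝ) else 0) =
      fun z => (1 : ℝ) * (if G.edist x z = ((0 : ℕ) : ℕ∞) then (1 : ℝ) else 0) := by
    funext z
    simp [eq_comm (a := z)]
  have hone : Td d G (fun z => if z = x then (1 : ℝ) else 0) =
      fun y => (Real.sqrt d)⁻¹ ^ 1 * (if G.edist x y = ((1 : ℕ) : ℕ∞) then (1 : ℝ) else 0) := by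
    funext y
    change (Real.sqrt d)⁻¹ * ∑ z ∈ G.neighborFinset y, (if z = x then (1 : ℝ) else 0) = _
    simp [G.adj_comm x y]
  induction n using Nat.strong_induction_on with
  | _ n ih =>
    rcases n with _ | _ | _ | n
    · simp only [geron, map_one, Module.End.one_apply, pow_zero]
      exact hzero
    · simp only [geron, aeval_X]
      exact hone
    · funext y
      simp only [geron, map_sub, map_mul, aeval_X, aeval_C, LinearMap.sub_apply, pow_two,
        Module.End.mul_apply, Module.algebraMap_end_apply, Pi.sub_apply, Pi.smul_apply,
        smul_eq_mul, hone]
      rw [Td_smul_apply, sum_neighbor_sphere G hreg hgirth x y 0 hn, congrFun hzero y]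
      simp only [zero_add, if_true, pow_one]
      have : ((d : ℝ) + 1) / d = (Real.sqrt d)⁻¹ * (Real.sqrt d)⁻¹ * (d + 1) := by
        rw [div_eq_iff hd0]
        linear_combination (-(d : ℝ) - 1) * hs
      rw [this]
      ring
    · funext y
      simp only [geron, map_sub, map_mul, aeval_X, LinearMap.sub_apply,
        Module.End.mul_apply, Pi.sub_apply]
      rw [ih (n + 2) (by omega) (by omega), ih (n + 1) (by omega) (by omega), Td_smul_apply,
        sum_neighbor_sphere G hreg hgirth x y (n + 1) (by omega), if_neg (Nat.succ_ne_zero n)]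
      simp only [add_assoc, Nat.reduceAdd]
      linear_combination ((Real.sqrt d)⁻¹ ^ (n + 1) *
        (if G.edist x y = ((n + 1 : ℕ) : ℕ∞) then (1 : ℝ) else 0)) * hs

/-- On a `(d+1)`-regular graph of girth greater than `2N`, the sphere operators of radius
`n ≤ N` agree with those of the tree: `S_n δ_x (y) = d^{-n/2}` if `dist(x,y) = n` and `0`
otherwise; in particular `‖S_n δ_x‖_∞ ≤ d^{-n/2}`. -/
theorem sphere_operator_high_girth (d N : ℕ) (hd : 2 ≤ d) (hN : 1 ≤ N)
    {V : Type*} [Fintype V] [DecidableEq V] (G : SimpleGraph V) [DecidableRel G.Adj]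
    (hreg : G.IsRegularOfDegree (d + 1))
    (hgirth : ∀ (v : V) (c : G.Walk v v), c.IsCycle → 2 * N < c.length) :
    ∀ n : ℕ, n ≤ N → ∀ x : V,
      (∀ y : V,
        (G.edist x y = (n : ℕ∞) →
          aeval (Td d G) (geron d n) (fun z => if z = x then (1 : ℝ) else 0) y
            = (d : ℝ) ^ (-(n : ℝ) / 2)) ∧
        (G.edist x y ≠ (n : ℕ∞) →
          aeval (Td d G) (geron d n) (fun z => if z = x then (1 : ℝ) else 0) y = 0)) ∧
      lpNorm ∞ (aeval (Td d G) (geron d n) (fun z => if z = x then (1 : ℝ) else 0))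
        ≤ (d : ℝ) ^ (-(n : ℝ) / 2) := by
  intro n hn x
  have hpow : (d : ℝ) ^ (-(n : ℝ) / 2) = ((Real.sqrt d)⁻¹) ^ n := by
    rw [Real.sqrt_eq_rpow, ← Real.rpow_neg (Nat.cast_nonneg d), ← Real.rpow_natCast,
      ← Real.rpow_mul (Nat.cast_nonneg d)]
    congr 1
    ring
  have hnonneg : 0 ≤ ((Real.sqrt d)⁻¹) ^ n := by positivity
  rw [sphere_operator_eq hd G hreg hgirth x n hn, hpow]
  refine ⟨fun y => ⟨fun h => ?_, fun h => ?_⟩, ?_⟩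
  · simp [h]
  · simp [h]
  · rw [lpNorm, if_pos rfl]
    have : Nonempty V := ⟨x⟩
    refine ciSup_le fun y => ?_
    split_ifs
    · rw [mul_one, abs_of_nonneg hnonneg]
    · simp
end
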